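/- arXiv:2307.09932 — 11 statements merged into one kernel-verified Lean document; each statement's English description precedes it below -/
import Mathlib

section
/- Let u, U, Φ, Φ* be smooth functions on ℝ³ (coordinates (t,x,y)), with u, U real-valued and Φ, Φ* complex-valued, satisfying: ∂_x U = ∂_y u; the Jost equations −∂_yΦ + ∂_x²Φ + uΦ = 0 and 4∂_tΦ + 4∂_x³Φ + 6u∂_xΦ + 3(∂_xu)Φ + 3UΦ = 0; and the dual Jost equations ∂_yΦ* + ∂_x²Φ* + uΦ* = 0 and 4∂_tΦ* + 4∂_x³Φ* + 6u∂_xΦ* + 3(∂_xu)Φ* − 3UΦ* = 0. Then w := ΦΦ* satisfies the adjoint linearized KP-II equation ∂_x(4∂_tw + 6u∂_xw + ∂_x³w) + 3∂_y²w = 0, and v := ∂_x(ΦΦ*) satisfies the linearized KP-II equation ∂_x(4∂_tv + 6∂_x(uv) + ∂_x³v) + 3∂_y²v = 0. -/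
noncomputable def pt {E : Type*} [NormedAddCommGroup E] [NormedSpace ℝ E]
    (f : ℝ → ℝ → ℝ → E) : ℝ → ℝ → ℝ → E :=
  fun t x y => deriv (fun s => f s x y) t

noncomputable def px {E : Type*} [NormedAddCommGroup E] [NormedSpace ℝ E]
    (f : ℝ → ℝ → ℝ → E) : ℝ → ℝ → ℝ → E :=
  fun t x y => deriv (fun s => f t s y) x

noncomputable def py {E : Type*} [NormedAddCommGroup E] [NormedSpace ℝ E]
    (f : ℝ → ℝ → ℝ → E) : ℝ → ℝ → ℝ → E :=
  fun t x y => deriv (fun s => f t x s) y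

open scoped ContDiff

section PartialDerivatives

variable {E : Type*} [NormedAddCommGroup E] [NormedSpace ℝ E]

/-- Joint smoothness of a curried function of three real variables. -/
def JointlySmooth (f : ℝ → ℝ → ℝ → E) : Prop :=
  ContDiff ℝ ∞ fun p : ℝ × ℝ × ℝ => f p.1 p.2.1 p.2.2

/-- The derivative of a curried function of three real variables in the direction `v`. -/
noncomputable def dirDeriv (v : ℝ × ℝ × ℝ) (f : ℝ → ℝ → ℝ → E) : ℝ → ℝ → ℝ → E :=
  fun t x y => fderiv ℝ (fun p : ℝ × ℝ × ℝ => f p.1 p.2.1 p.2.2) (t, x, y) v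

theorem JointlySmooth.differentiableAt {f : ℝ → ℝ → ℝ → E} (hf : JointlySmooth f)
    (p : ℝ × ℝ × ℝ) :
    DifferentiableAt ℝ (fun p : ℝ × ℝ × ℝ => f p.1 p.2.1 p.2.2) p :=
  (ContDiff.differentiable hf (by simp)).differentiableAt

theorem JointlySmooth.pt_eq {f : ℝ → ℝ → ℝ → E} (hf : JointlySmooth f) :
    pt f = dirDeriv (1, 0, 0) f := by
  funext t x y
  have hline : HasDerivAt (fun s : ℝ => (s, x, y)) ((1 : ℝ), (0 : ℝ), (0 : ℝ)) t :=
    (hasDerivAt_id t).prodMk ((hasDerivAt_const t x).prodMk (hasDerivAt_const t y))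
  exact ((hf.differentiableAt (t, x, y)).hasFDerivAt.comp_hasDerivAt t hline).deriv

theorem JointlySmooth.hasDerivAt_x {f : ℝ → ℝ → ℝ → E} (hf : JointlySmooth f) (t x y : ℝ) :
    HasDerivAt (fun s => f t s y) (dirDeriv (0, 1, 0) f t x y) x := by
  have hline : HasDerivAt (fun s : ℝ => (t, s, y)) ((0 : ℝ), (1 : ℝ), (0 : ℝ)) x :=
    (hasDerivAt_const x t).prodMk ((hasDerivAt_id x).prodMk (hasDerivAt_const x y))
  exact (hf.differentiableAt (t, x, y)).hasFDerivAt.comp_hasDerivAt x hline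

theorem JointlySmooth.px_eq {f : ℝ → ℝ → ℝ → E} (hf : JointlySmooth f) :
    px f = dirDeriv (0, 1, 0) f := by
  funext t x y
  exact (hf.hasDerivAt_x t x y).deriv

theorem JointlySmooth.py_eq {f : ℝ → ℝ → ℝ → E} (hf : JointlySmooth f) :
    py f = dirDeriv (0, 0, 1) f := by
  funext t x y
  have hline : HasDerivAt (fun s : ℝ => (t, x, s)) ((0 : ℝ), (0 : ℝ), (1 : ℝ)) y :=
    (hasDerivAt_const y t).prodMk ((hasDerivAt_const y x).prodMk (hasDerivAt_id y))
  exact ((hf.differentiableAt (t, x, y)).hasFDerivAt.comp_hasDerivAt y hline).deriv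

theorem JointlySmooth.contDiff_fderiv {f : ℝ → ℝ → ℝ → E} (hf : JointlySmooth f) :
    ContDiff ℝ ∞ (fderiv ℝ fun p : ℝ × ℝ × ℝ => f p.1 p.2.1 p.2.2) :=
  ContDiff.fderiv_right hf (by simp)

theorem JointlySmooth.dirDeriv {f : ℝ → ℝ → ℝ → E} (hf : JointlySmooth f)
    (v : ℝ × ℝ × ℝ) : JointlySmooth (dirDeriv v f) :=
  hf.contDiff_fderiv.clm_apply contDiff_const

theorem JointlySmooth.pt {f : ℝ → ℝ → ℝ → E} (hf : JointlySmooth f) :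
    JointlySmooth (pt f) := hf.pt_eq ▸ hf.dirDeriv _

theorem JointlySmooth.px {f : ℝ → ℝ → ℝ → E} (hf : JointlySmooth f) :
    JointlySmooth (px f) := hf.px_eq ▸ hf.dirDeriv _

theorem JointlySmooth.py {f : ℝ → ℝ → ℝ → E} (hf : JointlySmooth f) :
    JointlySmooth (py f) := hf.py_eq ▸ hf.dirDeriv _

theorem JointlySmooth.dirDeriv_comm {f : ℝ → ℝ → ℝ → E} (hf : JointlySmooth f)
    (v w : ℝ × ℝ × ℝ) : _root_.dirDeriv v (_root_.dirDeriv w f) =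
      _root_.dirDeriv w (_root_.dirDeriv v f) := by
  have second (v w : ℝ × ℝ × ℝ) (t x y : ℝ) : _root_.dirDeriv v (_root_.dirDeriv w f) t x y =
      fderiv ℝ (fderiv ℝ fun p : ℝ × ℝ × ℝ => f p.1 p.2.1 p.2.2) (t, x, y) v w := by
    have hd := (hf.contDiff_fderiv.differentiable (by simp)).differentiableAt (x := (t, x, y))
    have h := (hd.hasFDerivAt.clm_apply (hasFDerivAt_const w (t, x, y))).fderiv
    exact (DFunLike.congr_fun h v).trans (by simp)
  funext t x y
  rw [second, second]
  exact (ContDiffAt.isSymmSndFDerivAt (ContDiff.contDiffAt hf)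
    (by simpa using WithTop.coe_le_coe.mpr (le_top : (2 : ℕ∞) ≤ ⊤))) v w

theorem JointlySmooth.py_px {f : ℝ → ℝ → ℝ → E} (hf : JointlySmooth f) :
    _root_.py (_root_.px f) = _root_.px (_root_.py f) := by
  rw [hf.px.py_eq, hf.py.px_eq, hf.px_eq, hf.py_eq, hf.dirDeriv_comm]

theorem JointlySmooth.pt_px {f : ℝ → ℝ → ℝ → E} (hf : JointlySmooth f) :
    _root_.pt (_root_.px f) = _root_.px (_root_.pt f) := by
  rw [hf.px.pt_eq, hf.pt.px_eq, hf.px_eq, hf.pt_eq, hf.dirDeriv_comm]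

theorem JointlySmooth.add {f g : ℝ → ℝ → ℝ → E} (hf : JointlySmooth f)
    (hg : JointlySmooth g) : JointlySmooth (f + g) := ContDiff.add hf hg

theorem JointlySmooth.sub {f g : ℝ → ℝ → ℝ → E} (hf : JointlySmooth f)
    (hg : JointlySmooth g) : JointlySmooth (f - g) := ContDiff.sub hf hg

theorem dirDeriv_add {f g : ℝ → ℝ → ℝ → E} (hf : JointlySmooth f) (hg : JointlySmooth g)
    (v : ℝ × ℝ × ℝ) : dirDeriv v (f + g) = dirDeriv v f + dirDeriv v g := by
  funext t x y
  exact DFunLike.congr_fun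
    ((hf.differentiableAt (t, x, y)).hasFDerivAt.add
      (hg.differentiableAt (t, x, y)).hasFDerivAt).fderiv v

theorem dirDeriv_sub {f g : ℝ → ℝ → ℝ → E} (hf : JointlySmooth f) (hg : JointlySmooth g)
    (v : ℝ × ℝ × ℝ) : dirDeriv v (f - g) = dirDeriv v f - dirDeriv v g := by
  funext t x y
  exact DFunLike.congr_fun
    ((hf.differentiableAt (t, x, y)).hasFDerivAt.sub
      (hg.differentiableAt (t, x, y)).hasFDerivAt).fderiv v

theorem px_add {f g : ℝ → ℝ → ℝ → E} (hf : JointlySmooth f) (hg : JointlySmooth g) :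
    px (f + g) = px f + px g := by
  rw [(hf.add hg).px_eq, hf.px_eq, hg.px_eq, dirDeriv_add hf hg]

theorem px_sub {f g : ℝ → ℝ → ℝ → E} (hf : JointlySmooth f) (hg : JointlySmooth g) :
    px (f - g) = px f - px g := by
  rw [(hf.sub hg).px_eq, hf.px_eq, hg.px_eq, dirDeriv_sub hf hg]

theorem py_sub {f g : ℝ → ℝ → ℝ → E} (hf : JointlySmooth f) (hg : JointlySmooth g) :
    py (f - g) = py f - py g := by
  rw [(hf.sub hg).py_eq, hf.py_eq, hg.py_eq, dirDeriv_sub hf hg]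

end PartialDerivatives

section Products

variable {f g : ℝ → ℝ → ℝ → ℂ}

theorem JointlySmooth.mul (hf : JointlySmooth f) (hg : JointlySmooth g) :
    JointlySmooth (f * g) := ContDiff.mul hf hg

theorem dirDeriv_mul (hf : JointlySmooth f) (hg : JointlySmooth g) (v : ℝ × ℝ × ℝ) :
    dirDeriv v (f * g) = dirDeriv v f * g + f * dirDeriv v g := by
  funext t x y
  have h := DFunLike.congr_fun
    ((hf.differentiableAt (t, x, y)).hasFDerivAt.mul
      (hg.differentiableAt (t, x, y)).hasFDerivAt).fderiv v
  refine h.trans ?_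
  simp [dirDeriv]
  ring

theorem pt_mul (hf : JointlySmooth f) (hg : JointlySmooth g) :
    pt (f * g) = pt f * g + f * pt g := by
  rw [(hf.mul hg).pt_eq, hf.pt_eq, hg.pt_eq, dirDeriv_mul hf hg]

theorem px_mul (hf : JointlySmooth f) (hg : JointlySmooth g) :
    px (f * g) = px f * g + f * px g := by
  rw [(hf.mul hg).px_eq, hf.px_eq, hg.px_eq, dirDeriv_mul hf hg]

theorem py_mul (hf : JointlySmooth f) (hg : JointlySmooth g) :
    py (f * g) = py f * g + f * py g := by
  rw [(hf.mul hg).py_eq, hf.py_eq, hg.py_eq, dirDeriv_mul hf hg]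

theorem JointlySmooth.const (c : ℂ) : JointlySmooth fun _ _ _ => c := contDiff_const

theorem px_const_mul (c : ℂ) (hf : JointlySmooth f) :
    px ((fun _ _ _ => c) * f) = (fun _ _ _ => c) * px f := by
  rw [px_mul (.const c) hf]
  funext t x y
  simp [px]

theorem JointlySmooth.ofReal {u : ℝ → ℝ → ℝ → ℝ} (hu : JointlySmooth u) :
    JointlySmooth fun t x y => (u t x y : ℂ) := Complex.ofRealCLM.contDiff.comp hu

theorem px_ofReal {u : ℝ → ℝ → ℝ → ℝ} (hu : JointlySmooth u) :
    px (fun t x y => (u t x y : ℂ)) = fun t x y => ((px u t x y : ℝ) : ℂ) := by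
  funext t x y
  exact (hu.hasDerivAt_x t x y).differentiableAt.hasDerivAt.ofReal_comp.deriv

end Products

section JostProducts

variable {q Q f g : ℝ → ℝ → ℝ → ℂ}

/-- The `y`-derivative of a product of solutions of `-f_y + f_xx + q f = 0` and
`g_y + g_xx + q g = 0` is the `x`-derivative of their Wronskian. -/
theorem py_jost_mul (hf : JointlySmooth f) (hg : JointlySmooth g)
    (hfy : py f = px (px f) + q * f) (hgy : py g = -px (px g) - q * g) :
    py (f * g) = px (px f * g - f * px g) := by
  rw [py_mul hf hg, px_sub (hf.px.mul hg) (hf.mul hg.px), px_mul hf.px hg, px_mul hf hg.px,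
    hfy, hgy]
  ring

/-- The `x`-antiderivative of the adjoint linearized KP-II equation for a product of a Jost and
a dual Jost solution. -/
theorem jost_mul_conservation (hq : JointlySmooth q) (hf : JointlySmooth f)
    (hg : JointlySmooth g)
    (hfy : py f = px (px f) + q * f) (hgy : py g = -px (px g) - q * g)
    (hft : 4 * pt f = -(4 * px (px (px f)) + 6 * q * px f + 3 * px q * f + 3 * Q * f))
    (hgt : 4 * pt g = -(4 * px (px (px g)) + 6 * q * px g + 3 * px q * g - 3 * Q * g)) :
    4 * pt (f * g) + 6 * q * px (f * g) + px (px (px (f * g)))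
      + 3 * py (px f * g - f * px g) = 0 := by
  have hfxy : py (px f) = px (px (px f)) + (px q * f + q * px f) := by
    rw [hf.py_px, hfy, px_add hf.px.px (hq.mul hf), px_mul hq hf]
  have hgxy : py (px g) = -px (px (px g)) - (px q * g + q * px g) := by
    have hsum : px (py g + px (px g)) = -px (q * g) := by
      rw [hgy]
      have : -px (px g) - q * g + px (px g) = (fun _ _ _ => (-1 : ℂ)) * (q * g) := by
        funext t x y
        simp only [Pi.add_apply, Pi.sub_apply, Pi.neg_apply, Pi.mul_apply]
        ring
      rw [this, px_const_mul _ (hq.mul hg)]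
      funext t x y
      simp
    rw [px_add hg.py hg.px.px, px_mul hq hg] at hsum
    rw [hg.py_px]
    linear_combination hsum
  rw [pt_mul hf hg, px_mul hf hg, px_add (hf.px.mul hg) (hf.mul hg.px), px_mul hf.px hg,
    px_mul hf hg.px, px_add ((hf.px.px.mul hg).add (hf.px.mul hg.px))
      ((hf.px.mul hg.px).add (hf.mul hg.px.px)), px_add (hf.px.px.mul hg) (hf.px.mul hg.px),
    px_add (hf.px.mul hg.px) (hf.mul hg.px.px), px_mul hf.px.px hg, px_mul hf.px hg.px,
    px_mul hf hg.px.px, py_sub (hf.px.mul hg) (hf.mul hg.px), py_mul hf.px hg,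
    py_mul hf hg.px, hfxy, hgxy, hfy, hgy]
  linear_combination g * hft + f * hgt

end JostProducts

/-- products of Jost and dual Jost solutions solve the
(adjoint) linearized KP-II equation. -/
theorem jost_product_solves_linearized_KPII
    (u U : ℝ → ℝ → ℝ → ℝ) (Φ Φs : ℝ → ℝ → ℝ → ℂ)
    (hu : ContDiff ℝ (⊤ : ℕ∞) fun p : ℝ × ℝ × ℝ => u p.1 p.2.1 p.2.2)
    (hU : ContDiff ℝ (⊤ : ℕ∞) fun p : ℝ × ℝ × ℝ => U p.1 p.2.1 p.2.2)
    (hΦ : ContDiff ℝ (⊤ : ℕ∞) fun p : ℝ × ℝ × ℝ => Φ p.1 p.2.1 p.2.2)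
    (hΦs : ContDiff ℝ (⊤ : ℕ∞) fun p : ℝ × ℝ × ℝ => Φs p.1 p.2.1 p.2.2)
    (hUx : ∀ t x y, px U t x y = py u t x y)
    (hL : ∀ t x y, -py Φ t x y + px (px Φ) t x y + (u t x y : ℂ) * Φ t x y = 0)
    (hB : ∀ t x y, 4 * pt Φ t x y + 4 * px (px (px Φ)) t x y
        + 6 * (u t x y : ℂ) * px Φ t x y + 3 * ((px u t x y : ℝ) : ℂ) * Φ t x y
        + 3 * (U t x y : ℂ) * Φ t x y = 0)
    (hLs : ∀ t x y, py Φs t x y + px (px Φs) t x y + (u t x y : ℂ) * Φs t x y = 0)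
    (hBs : ∀ t x y, 4 * pt Φs t x y + 4 * px (px (px Φs)) t x y
        + 6 * (u t x y : ℂ) * px Φs t x y + 3 * ((px u t x y : ℝ) : ℂ) * Φs t x y
        - 3 * (U t x y : ℂ) * Φs t x y = 0) :
    (∀ t x y,
        px (fun a b c => 4 * pt (fun d e f => Φ d e f * Φs d e f) a b c
              + 6 * (u a b c : ℂ) * px (fun d e f => Φ d e f * Φs d e f) a b c
              + px (px (px fun d e f => Φ d e f * Φs d e f)) a b c) t x y
          + 3 * py (py fun d e f => Φ d e f * Φs d e f) t x y = 0)
    ∧ (∀ t x y,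
        px (fun a b c => 4 * pt (px fun d e f => Φ d e f * Φs d e f) a b c
              + 6 * px (fun d e f => (u d e f : ℂ)
                  * px (fun d' e' f' => Φ d' e' f' * Φs d' e' f') d e f) a b c
              + px (px (px (px fun d e f => Φ d e f * Φs d e f))) a b c) t x y
          + 3 * py (py (px fun d e f => Φ d e f * Φs d e f)) t x y = 0) := by
  have sc := JointlySmooth.ofReal hu
  have sf : JointlySmooth Φ := hΦ
  have sg : JointlySmooth Φs := hΦs
  set q : ℝ → ℝ → ℝ → ℂ := fun t x y => (u t x y : ℂ) with hq
  have hqx : px q = fun t x y => ((px u t x y : ℝ) : ℂ) := px_ofReal hu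
  have hfy : py Φ = px (px Φ) + q * Φ := by
    funext t x y
    simp only [Pi.add_apply, Pi.mul_apply, hq]
    linear_combination -hL t x y
  have hgy : py Φs = -px (px Φs) - q * Φs := by
    funext t x y
    simp only [Pi.sub_apply, Pi.neg_apply, Pi.mul_apply, hq]
    linear_combination hLs t x y
  have hft : 4 * pt Φ = -(4 * px (px (px Φ)) + 6 * q * px Φ + 3 * px q * Φ
      + 3 * (fun t x y => (U t x y : ℂ)) * Φ) := by
    funext t x y
    simp only [Pi.add_apply, Pi.neg_apply, Pi.mul_apply, Pi.ofNat_apply, hqx]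
    simp only [hq]
    linear_combination hB t x y
  have hgt : 4 * pt Φs = -(4 * px (px (px Φs)) + 6 * q * px Φs + 3 * px q * Φs
      - 3 * (fun t x y => (U t x y : ℂ)) * Φs) := by
    funext t x y
    simp only [Pi.add_apply, Pi.sub_apply, Pi.neg_apply, Pi.mul_apply, Pi.ofNat_apply, hqx]
    simp only [hq]
    linear_combination hBs t x y
  have hcons := jost_mul_conservation sc sf sg hfy hgy hft hgt
  have hwy := py_jost_mul sf sg hfy hgy
  have sw := sf.mul sg
  have sW := (sf.px.mul sg).sub (sf.mul sg.px)
  set w := Φ * Φs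
  set W := px Φ * Φs - Φ * px Φs
  have adjoint : px (4 * pt w + 6 * q * px w + px (px (px w))) + 3 * py (py w) = 0 := by
    have hA : 4 * pt w + 6 * q * px w + px (px (px w)) = (fun _ _ _ => (-3 : ℂ)) * py W := by
      rw [eq_neg_of_add_eq_zero_left hcons]
      funext t x y
      simp
    rw [hA, px_const_mul _ sW.py, hwy, sW.py_px]
    funext t x y
    simp
  have hsplit : px (4 * pt w + 6 * q * px w + px (px (px w))) =
      4 * pt (px w) + 6 * px (q * px w) + px (px (px (px w))) := by
    have s4 : JointlySmooth (4 * pt w) := (JointlySmooth.const 4).mul sw.pt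
    have s6 : JointlySmooth (6 * (q * px w)) := (JointlySmooth.const 6).mul (sc.mul sw.px)
    have e4 : px (4 * pt w) = 4 * px (pt w) := px_const_mul 4 sw.pt
    have e6 : px (6 * (q * px w)) = 6 * px (q * px w) := px_const_mul 6 (sc.mul sw.px)
    rw [mul_assoc, px_add (s4.add s6) sw.px.px.px, px_add s4 s6, e4, e6, sw.pt_px]
  have linearized : px (4 * pt (px w) + 6 * px (q * px w) + px (px (px (px w))))
      + 3 * py (py (px w)) = 0 := by
    rw [← hsplit, eq_neg_of_add_eq_zero_left adjoint, sw.py_px, sw.py.py_px]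
    have hneg : -(3 * py (py w)) = (fun _ _ _ => (-3 : ℂ)) * py (py w) := by
      funext t x y
      simp
    rw [hneg, px_const_mul _ sw.py.py]
    funext t x y
    simp
  exact ⟨fun t x y => congrFun (congrFun (congrFun adjoint t) x) y,
    fun t x y => congrFun (congrFun (congrFun linearized t) x) y⟩
end

section
/- Let τ₁, τ₂ : ℝ² → ℝ (coordinates (x,y)) be smooth and everywhere positive, and suppose they satisfy the bilinear Bäcklund relation τ₁∂_x²τ₂ − 2(∂_xτ₁)(∂_xτ₂) + τ₂∂_x²τ₁ + τ₂∂_yτ₁ − τ₁∂_yτ₂ = 0. Set wᵢ := 2∂_x log τᵢ (i = 1,2). Then ∂_x(2∂_yτᵢ/τᵢ) = ∂_y wᵢ for i = 1,2, and 2(∂_yτ₂/τ₂ − ∂_yτ₁/τ₁) = ∂_x(w₂ + w₁) + (1/2)(w₂ − w₁)². -/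
noncomputable def pX (f : ℝ → ℝ → ℝ) : ℝ → ℝ → ℝ :=
  fun x y => deriv (fun s => f s y) x

noncomputable def pY (f : ℝ → ℝ → ℝ) : ℝ → ℝ → ℝ :=
  fun x y => deriv (fun s => f x s) y

/-- A partial derivative in the first variable is a directional derivative along `(1, 0)`. -/
theorem pX_eq_fderiv {f : ℝ → ℝ → ℝ} (hf : Differentiable ℝ fun p : ℝ × ℝ => f p.1 p.2)
    (x y : ℝ) : pX f x y = fderiv ℝ (fun p : ℝ × ℝ => f p.1 p.2) (x, y) (1, 0) :=
  ((hf (x, y)).hasFDerivAt.comp_hasDerivAt (f := fun s => (s, y)) x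
    ((hasDerivAt_id x).prodMk (hasDerivAt_const x y))).deriv

/-- A partial derivative in the second variable is a directional derivative along `(0, 1)`. -/
theorem pY_eq_fderiv {f : ℝ → ℝ → ℝ} (hf : Differentiable ℝ fun p : ℝ × ℝ => f p.1 p.2)
    (x y : ℝ) : pY f x y = fderiv ℝ (fun p : ℝ × ℝ => f p.1 p.2) (x, y) (0, 1) :=
  ((hf (x, y)).hasFDerivAt.comp_hasDerivAt (f := fun s => (x, s)) y
    ((hasDerivAt_const y x).prodMk (hasDerivAt_id y))).deriv

theorem contDiff_pX {f : ℝ → ℝ → ℝ} (hf : ContDiff ℝ (⊤ : ℕ∞) fun p : ℝ × ℝ => f p.1 p.2) :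
    ContDiff ℝ (⊤ : ℕ∞) fun p : ℝ × ℝ => pX f p.1 p.2 := by
  simp only [pX_eq_fderiv (hf.differentiable (by simp))]
  exact (hf.fderiv_right (m := (⊤ : ℕ∞)) (by simp)).clm_apply contDiff_const

theorem contDiff_pY {f : ℝ → ℝ → ℝ} (hf : ContDiff ℝ (⊤ : ℕ∞) fun p : ℝ × ℝ => f p.1 p.2) :
    ContDiff ℝ (⊤ : ℕ∞) fun p : ℝ × ℝ => pY f p.1 p.2 := by
  simp only [pY_eq_fderiv (hf.differentiable (by simp))]
  exact (hf.fderiv_right (m := (⊤ : ℕ∞)) (by simp)).clm_apply contDiff_const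

theorem pX_pY_comm {f : ℝ → ℝ → ℝ} (hf : ContDiff ℝ (⊤ : ℕ∞) fun p : ℝ × ℝ => f p.1 p.2)
    (x y : ℝ) : pX (pY f) x y = pY (pX f) x y := by
  have hd : Differentiable ℝ fun p : ℝ × ℝ => f p.1 p.2 := hf.differentiable (by simp)
  have hd' : DifferentiableAt ℝ (fderiv ℝ fun p : ℝ × ℝ => f p.1 p.2) (x, y) :=
    (hf.fderiv_right (m := (⊤ : ℕ∞)) (by simp)).differentiable (by simp) (x, y)
  have hsymm : IsSymmSndFDerivAt ℝ (fun p : ℝ × ℝ => f p.1 p.2) (x, y) :=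
    hf.contDiffAt.isSymmSndFDerivAt (by
      rw [minSmoothness_of_isRCLikeNormedField]
      exact WithTop.coe_le_coe.2 (le_top : (2 : ℕ∞) ≤ ⊤))
  rw [pX_eq_fderiv ((contDiff_pY hf).differentiable (by simp)),
    pY_eq_fderiv ((contDiff_pX hf).differentiable (by simp))]
  simp only [pX_eq_fderiv hd, pY_eq_fderiv hd]
  rw [fderiv_clm_apply hd' (differentiableAt_const _),
    fderiv_clm_apply hd' (differentiableAt_const _)]
  simpa using hsymm (1, 0) (0, 1)

theorem differentiable_left {f : ℝ → ℝ → ℝ}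
    (hf : ContDiff ℝ (⊤ : ℕ∞) fun p : ℝ × ℝ => f p.1 p.2) (y : ℝ) :
    Differentiable ℝ fun s => f s y :=
  (hf.differentiable (by simp)).comp (g := fun p : ℝ × ℝ => f p.1 p.2) (f := fun s => (s, y))
    (by fun_prop)

theorem differentiable_right {f : ℝ → ℝ → ℝ}
    (hf : ContDiff ℝ (⊤ : ℕ∞) fun p : ℝ × ℝ => f p.1 p.2) (x : ℝ) :
    Differentiable ℝ fun s => f x s :=
  (hf.differentiable (by simp)).comp (g := fun p : ℝ × ℝ => f p.1 p.2) (f := fun s => (x, s))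
    (by fun_prop)

theorem pX_log {τ : ℝ → ℝ → ℝ}
    (hτ : ContDiff ℝ (⊤ : ℕ∞) fun p : ℝ × ℝ => τ p.1 p.2) (hpos : ∀ x y, 0 < τ x y) (x y : ℝ) :
    (pX fun a b => Real.log (τ a b)) x y = pX τ x y / τ x y :=
  deriv.log (differentiable_left hτ y x) (hpos x y).ne'

theorem pY_log {τ : ℝ → ℝ → ℝ}
    (hτ : ContDiff ℝ (⊤ : ℕ∞) fun p : ℝ × ℝ => τ p.1 p.2) (hpos : ∀ x y, 0 < τ x y) (x y : ℝ) :
    (pY fun a b => Real.log (τ a b)) x y = pY τ x y / τ x y :=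
  deriv.log (differentiable_right hτ x y) (hpos x y).ne'

theorem contDiff_log_uncurried {τ : ℝ → ℝ → ℝ}
    (hτ : ContDiff ℝ (⊤ : ℕ∞) fun p : ℝ × ℝ => τ p.1 p.2) (hpos : ∀ x y, 0 < τ x y) :
    ContDiff ℝ (⊤ : ℕ∞) fun p : ℝ × ℝ => Real.log (τ p.1 p.2) :=
  hτ.log fun p => ne_of_gt (hpos p.1 p.2)

/-- The function `2 ∂_y τ / τ` is an `x`-antiderivative of `∂_y w`, where `w = 2 ∂_x log τ`. -/
theorem pX_two_mul_pY_div {τ : ℝ → ℝ → ℝ}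
    (hτ : ContDiff ℝ (⊤ : ℕ∞) fun p : ℝ × ℝ => τ p.1 p.2) (hpos : ∀ x y, 0 < τ x y) (x y : ℝ) :
    pX (fun a b => 2 * pY τ a b / τ a b) x y
      = pY (fun a b => 2 * pX (fun c d => Real.log (τ c d)) a b) x y := by
  have hlog := contDiff_log_uncurried hτ hpos
  have hfun : (fun a b => 2 * pY τ a b / τ a b)
      = fun a b => 2 * pY (fun c d => Real.log (τ c d)) a b := by
    funext a b
    rw [pY_log hτ hpos, mul_div_assoc]
  rw [hfun]
  calc _ = 2 * pX (pY fun c d => Real.log (τ c d)) x y :=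
        deriv_const_mul 2 (differentiable_left (contDiff_pY hlog) y x)
    _ = 2 * pY (pX fun c d => Real.log (τ c d)) x y := by rw [pX_pY_comm hlog]
    _ = _ := (deriv_const_mul 2 (differentiable_right (contDiff_pX hlog) x y)).symm

theorem pX_pX_log {τ : ℝ → ℝ → ℝ}
    (hτ : ContDiff ℝ (⊤ : ℕ∞) fun p : ℝ × ℝ => τ p.1 p.2) (hpos : ∀ x y, 0 < τ x y) (x y : ℝ) :
    pX (pX fun a b => Real.log (τ a b)) x y
      = (pX (pX τ) x y * τ x y - pX τ x y * pX τ x y) / τ x y ^ 2 := by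
  have hfun : (pX fun a b => Real.log (τ a b)) = fun a b => pX τ a b / τ a b := by
    funext a b
    exact pX_log hτ hpos a b
  rw [hfun]
  exact deriv_fun_div (differentiable_left (contDiff_pX hτ) y x) (differentiable_left hτ y x)
    (ne_of_gt (hpos x y))

/-- the bilinear Bäcklund relation implies the auto-Bäcklund
relation for the potentials wᵢ = 2∂ₓ log τᵢ. -/
theorem bilinear_backlund_gives_potential_backlund
    (τ₁ τ₂ : ℝ → ℝ → ℝ)
    (hτ₁ : ContDiff ℝ (⊤ : ℕ∞) fun p : ℝ × ℝ => τ₁ p.1 p.2)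
    (hτ₂ : ContDiff ℝ (⊤ : ℕ∞) fun p : ℝ × ℝ => τ₂ p.1 p.2)
    (hpos₁ : ∀ x y, 0 < τ₁ x y) (hpos₂ : ∀ x y, 0 < τ₂ x y)
    (hBT : ∀ x y,
      τ₁ x y * pX (pX τ₂) x y - 2 * pX τ₁ x y * pX τ₂ x y
        + τ₂ x y * pX (pX τ₁) x y + τ₂ x y * pY τ₁ x y - τ₁ x y * pY τ₂ x y = 0) :
    (∀ x y, pX (fun a b => 2 * pY τ₁ a b / τ₁ a b) x y
        = pY (fun a b => 2 * pX (fun c d => Real.log (τ₁ c d)) a b) x y)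
    ∧ (∀ x y, pX (fun a b => 2 * pY τ₂ a b / τ₂ a b) x y
        = pY (fun a b => 2 * pX (fun c d => Real.log (τ₂ c d)) a b) x y)
    ∧ (∀ x y, 2 * (pY τ₂ x y / τ₂ x y - pY τ₁ x y / τ₁ x y)
        = pX (fun a b => 2 * pX (fun c d => Real.log (τ₂ c d)) a b
              + 2 * pX (fun c d => Real.log (τ₁ c d)) a b) x y
          + (1/2) * (2 * pX (fun c d => Real.log (τ₂ c d)) x y
              - 2 * pX (fun c d => Real.log (τ₁ c d)) x y)^2) := by
  refine ⟨pX_two_mul_pY_div hτ₁ hpos₁, pX_two_mul_pY_div hτ₂ hpos₂, fun x y => ?_⟩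
  have hsum : pX (fun a b => 2 * pX (fun c d => Real.log (τ₂ c d)) a b
        + 2 * pX (fun c d => Real.log (τ₁ c d)) a b) x y
      = 2 * pX (pX fun c d => Real.log (τ₂ c d)) x y
        + 2 * pX (pX fun c d => Real.log (τ₁ c d)) x y := by
    have h₁ := differentiable_left (contDiff_pX (f := fun c d => Real.log (τ₁ c d))
      (contDiff_log_uncurried hτ₁ hpos₁)) y x
    have h₂ := differentiable_left (contDiff_pX (f := fun c d => Real.log (τ₂ c d))
      (contDiff_log_uncurried hτ₂ hpos₂)) y x
    exact ((h₂.hasDerivAt.const_mul 2).add (h₁.hasDerivAt.const_mul 2)).deriv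
  rw [hsum, pX_pX_log hτ₁ hpos₁, pX_pX_log hτ₂ hpos₂, pX_log hτ₁ hpos₁, pX_log hτ₂ hpos₂]
  have hne₁ := (hpos₁ x y).ne'
  have hne₂ := (hpos₂ x y).ne'
  field_simp
  linear_combination (-(τ₁ x y * τ₂ x y)) * hBT x y
end

section
/- Let τ₁, τ₂ : ℝ² → ℝ (coordinates (x,y)) be smooth and everywhere positive, satisfying the bilinear Bäcklund relation τ₁∂_x²τ₂ − 2(∂_xτ₁)(∂_xτ₂) + τ₂∂_x²τ₁ + τ₂∂_yτ₁ − τ₁∂_yτ₂ = 0. Set u₁ := 2∂_x² log τ₁, u₂ := 2∂_x² log τ₂ and h := τ₂/τ₁. Then (∂_y − ∂_x²)h = h·u₁ and (∂_y + ∂_x²)(h⁻¹) = −h⁻¹·u₂. -/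
/-- The second derivative of a quotient `g / f`, corrected by `2 (g / f)` times the second
derivative of `log f`, is the second Hirota derivative of `f` and `g` divided by `f ^ 2`. -/
theorem deriv_deriv_div_add_log {f g : ℝ → ℝ} (hf : ContDiff ℝ 2 f) (hg : ContDiff ℝ 2 g)
    (hpos : ∀ s, 0 < f s) (x : ℝ) :
    deriv (fun s => deriv (fun r => g r / f r) s) x
        + g x / f x * (2 * deriv (fun s => deriv (fun r => Real.log (f r)) s) x)
      = (f x * deriv (deriv g) x - 2 * deriv f x * deriv g x + g x * deriv (deriv f) x)
        / f x ^ 2 := by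
  have hne : ∀ s, f s ≠ 0 := fun s => (hpos s).ne'
  have hf' (s : ℝ) : HasDerivAt f (deriv f s) s :=
    (hf.differentiable (by norm_num) s).hasDerivAt
  have hg' (s : ℝ) : HasDerivAt g (deriv g s) s :=
    (hg.differentiable (by norm_num) s).hasDerivAt
  have hf'' : HasDerivAt (deriv f) (deriv (deriv f) x) x :=
    (((contDiff_succ_iff_deriv (n := 1)).1 hf).2.2.differentiable (by norm_num) x).hasDerivAt
  have hg'' : HasDerivAt (deriv g) (deriv (deriv g) x) x :=
    (((contDiff_succ_iff_deriv (n := 1)).1 hg).2.2.differentiable (by norm_num) x).hasDerivAt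
  have hdiv : (fun s => deriv (fun r => g r / f r) s)
      = fun s => (deriv g s * f s - g s * deriv f s) / f s ^ 2 :=
    funext fun s => ((hg' s).fun_div (hf' s) (hne s)).deriv
  have hlog : (fun s => deriv (fun r => Real.log (f r)) s) = fun s => deriv f s / f s :=
    funext fun s => ((hf' s).log (hne s)).deriv
  rw [hdiv, hlog, (hf''.fun_div (hf' x) (hne x)).deriv,
    (((hg''.fun_mul (hf' x)).fun_sub ((hg' x).fun_mul hf'')).fun_div ((hf' x).fun_pow 2)
      (pow_ne_zero 2 (hne x))).deriv]
  have := hne x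
  field_simp
  ring

/-- heat-operator intertwining identities for the ratio
h = τ₂/τ₁ of Bäcklund-related τ-functions. -/
theorem backlund_ratio_heat_identities
    (τ₁ τ₂ : ℝ → ℝ → ℝ)
    (hτ₁ : ContDiff ℝ (⊤ : ℕ∞) fun p : ℝ × ℝ => τ₁ p.1 p.2)
    (hτ₂ : ContDiff ℝ (⊤ : ℕ∞) fun p : ℝ × ℝ => τ₂ p.1 p.2)
    (hpos₁ : ∀ x y, 0 < τ₁ x y) (hpos₂ : ∀ x y, 0 < τ₂ x y)
    (hBT : ∀ x y,
      τ₁ x y * pX (pX τ₂) x y - 2 * pX τ₁ x y * pX τ₂ x y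
        + τ₂ x y * pX (pX τ₁) x y + τ₂ x y * pY τ₁ x y - τ₁ x y * pY τ₂ x y = 0) :
    (∀ x y, pY (fun a b => τ₂ a b / τ₁ a b) x y
          - pX (pX fun a b => τ₂ a b / τ₁ a b) x y
        = (τ₂ x y / τ₁ x y) * (2 * pX (pX fun a b => Real.log (τ₁ a b)) x y))
    ∧ (∀ x y, pY (fun a b => (τ₂ a b / τ₁ a b)⁻¹) x y
          + pX (pX fun a b => (τ₂ a b / τ₁ a b)⁻¹) x y
        = -((τ₂ x y / τ₁ x y)⁻¹
            * (2 * pX (pX fun a b => Real.log (τ₂ a b)) x y))) := by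
  have sliceX {τ : ℝ → ℝ → ℝ} (h : ContDiff ℝ (⊤ : ℕ∞) fun p : ℝ × ℝ => τ p.1 p.2) (y : ℝ) :
      ContDiff ℝ 2 fun s => τ s y :=
    contDiff_infty.1 (h.comp (contDiff_id.prodMk contDiff_const)) 2
  have derivY {τ : ℝ → ℝ → ℝ} (h : ContDiff ℝ (⊤ : ℕ∞) fun p : ℝ × ℝ => τ p.1 p.2) (x y : ℝ) :
      HasDerivAt (fun s => τ x s) (pY τ x y) y :=
    ((h.comp (contDiff_const.prodMk contDiff_id)).differentiable (by simp) y).hasDerivAt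
  simp only [inv_div]
  refine ⟨fun x y => ?_, fun x y => ?_⟩
  · have hX : pX (pX fun a b => τ₂ a b / τ₁ a b) x y
          + τ₂ x y / τ₁ x y * (2 * pX (pX fun a b => Real.log (τ₁ a b)) x y)
        = (τ₁ x y * pX (pX τ₂) x y - 2 * pX τ₁ x y * pX τ₂ x y + τ₂ x y * pX (pX τ₁) x y)
          / τ₁ x y ^ 2 :=
      deriv_deriv_div_add_log (sliceX hτ₁ y) (sliceX hτ₂ y) (hpos₁ · y) x
    have hY : pY (fun a b => τ₂ a b / τ₁ a b) x y
        = (pY τ₂ x y * τ₁ x y - τ₂ x y * pY τ₁ x y) / τ₁ x y ^ 2 :=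
      ((derivY hτ₂ x y).fun_div (derivY hτ₁ x y) (hpos₁ x y).ne').deriv
    rw [sub_eq_iff_eq_add', hX, hY]
    congr 1
    linarith [hBT x y]
  · have hX : pX (pX fun a b => τ₁ a b / τ₂ a b) x y
          + τ₁ x y / τ₂ x y * (2 * pX (pX fun a b => Real.log (τ₂ a b)) x y)
        = (τ₂ x y * pX (pX τ₁) x y - 2 * pX τ₂ x y * pX τ₁ x y + τ₁ x y * pX (pX τ₂) x y)
          / τ₂ x y ^ 2 :=
      deriv_deriv_div_add_log (sliceX hτ₂ y) (sliceX hτ₁ y) (hpos₂ · y) x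
    have hY : pY (fun a b => τ₁ a b / τ₂ a b) x y
        = (pY τ₁ x y * τ₂ x y - τ₁ x y * pY τ₂ x y) / τ₂ x y ^ 2 :=
      ((derivY hτ₁ x y).fun_div (derivY hτ₂ x y) (hpos₂ x y).ne').deriv
    rw [eq_neg_iff_add_eq_zero, add_assoc, hX, hY, ← add_div, div_eq_zero_iff]
    left
    linarith [hBT x y]
end

section
/- Let τ₁, τ₂ : ℝ³ → ℝ (coordinates (t,x,y)) be smooth and everywhere positive, satisfying both bilinear Bäcklund relations: (i) τ₁∂_x²τ₂ − 2(∂_xτ₁)(∂_xτ₂) + τ₂∂_x²τ₁ + τ₂∂_yτ₁ − τ₁∂_yτ₂ = 0, and (ii) 4(τ₁∂_tτ₂ − τ₂∂_tτ₁) + 3(τ₁∂_x∂_yτ₂ − ∂_xτ₁∂_yτ₂ − ∂_yτ₁∂_xτ₂ + τ₂∂_x∂_yτ₁) + τ₁∂_x³τ₂ − 3∂_xτ₁∂_x²τ₂ + 3∂_x²τ₁∂_xτ₂ − τ₂∂_x³τ₁ = 0. Set u₁ := 2∂_x² log τ₁, u₂ := 2∂_x² log τ₂, v₂ := ∂_x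 log(τ₂/τ₁). Then 4∂_t log(τ₂/τ₁) + ∂_x(2u₂ + u₁) + 6∂_x(∂_yτ₁/τ₁) + 6v₂u₂ + 4v₂³ = 0. -/
/-- Joint smoothness of a curried function of three real variables. -/
def SmoothThree (f : ℝ → ℝ → ℝ → ℝ) : Prop :=
  ContDiff ℝ (⊤ : ℕ∞) fun p : ℝ × ℝ × ℝ => f p.1 p.2.1 p.2.2

namespace SmoothThree

variable {f g : ℝ → ℝ → ℝ → ℝ}

theorem hasFDerivAt (hf : SmoothThree f) (p : ℝ × ℝ × ℝ) :
    HasFDerivAt (fun p : ℝ × ℝ × ℝ => f p.1 p.2.1 p.2.2)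
      (fderiv ℝ (fun p : ℝ × ℝ × ℝ => f p.1 p.2.1 p.2.2) p) p :=
  (ContDiff.differentiable hf (by simp) p).hasFDerivAt

theorem hasDerivAt_x_fderiv (hf : SmoothThree f) (t x y : ℝ) :
    HasDerivAt (fun s => f t s y)
      (fderiv ℝ (fun p : ℝ × ℝ × ℝ => f p.1 p.2.1 p.2.2) (t, x, y) (0, 1, 0)) x :=
  HasFDerivAt.comp_hasDerivAt (f := fun s => (t, s, y)) x (hf.hasFDerivAt (t, x, y))
    ((hasDerivAt_const x t).prodMk ((hasDerivAt_id' x).prodMk (hasDerivAt_const x y)))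

theorem hasDerivAt_y_fderiv (hf : SmoothThree f) (t x y : ℝ) :
    HasDerivAt (fun s => f t x s)
      (fderiv ℝ (fun p : ℝ × ℝ × ℝ => f p.1 p.2.1 p.2.2) (t, x, y) (0, 0, 1)) y :=
  HasFDerivAt.comp_hasDerivAt (f := fun s => (t, x, s)) y (hf.hasFDerivAt (t, x, y))
    ((hasDerivAt_const y t).prodMk ((hasDerivAt_const y x).prodMk (hasDerivAt_id' y)))

theorem hasDerivAt_px (hf : SmoothThree f) (t x y : ℝ) :
    HasDerivAt (fun s => f t s y) (px f t x y) x :=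
  (hf.hasDerivAt_x_fderiv t x y).differentiableAt.hasDerivAt

theorem hasDerivAt_pt (hf : SmoothThree f) (t x y : ℝ) :
    HasDerivAt (fun s => f s x y) (pt f t x y) t :=
  (HasFDerivAt.comp_hasDerivAt (f := fun s => (s, x, y)) t (hf.hasFDerivAt (t, x, y))
    ((hasDerivAt_id' t).prodMk ((hasDerivAt_const t x).prodMk
      (hasDerivAt_const t y)))).differentiableAt.hasDerivAt

theorem contDiff_fderiv_apply (hf : SmoothThree f) (v : ℝ × ℝ × ℝ) :
    ContDiff ℝ (⊤ : ℕ∞)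
      fun p => fderiv ℝ (fun p : ℝ × ℝ × ℝ => f p.1 p.2.1 p.2.2) p v :=
  (ContDiff.fderiv_right hf (by simp)).clm_apply contDiff_const

theorem px (hf : SmoothThree f) : SmoothThree (px f) := by
  have h : (fun p : ℝ × ℝ × ℝ => _root_.px f p.1 p.2.1 p.2.2) =
      fun p => fderiv ℝ (fun p : ℝ × ℝ × ℝ => f p.1 p.2.1 p.2.2) p (0, 1, 0) :=
    funext fun p => (hf.hasDerivAt_x_fderiv p.1 p.2.1 p.2.2).deriv
  rw [SmoothThree, h]
  exact hf.contDiff_fderiv_apply (0, 1, 0)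

theorem py (hf : SmoothThree f) : SmoothThree (py f) := by
  have h : (fun p : ℝ × ℝ × ℝ => _root_.py f p.1 p.2.1 p.2.2) =
      fun p => fderiv ℝ (fun p : ℝ × ℝ × ℝ => f p.1 p.2.1 p.2.2) p (0, 0, 1) :=
    funext fun p => (hf.hasDerivAt_y_fderiv p.1 p.2.1 p.2.2).deriv
  rw [SmoothThree, h]
  exact hf.contDiff_fderiv_apply (0, 0, 1)

theorem px_log (hf : SmoothThree f) (h : ∀ t x y, 0 < f t x y) :
    (_root_.px fun t x y => Real.log (f t x y)) =
      fun t x y => _root_.px f t x y / f t x y := by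
  funext t x y
  exact ((hf.hasDerivAt_px t x y).log (h t x y).ne').deriv

theorem px_div (hf : SmoothThree f) (hg : SmoothThree g) (h : ∀ t x y, 0 < g t x y) :
    (_root_.px fun t x y => f t x y / g t x y) =
      fun t x y => (_root_.px f t x y * g t x y - f t x y * _root_.px g t x y) / g t x y ^ 2 := by
  funext t x y
  exact ((hf.hasDerivAt_px t x y).div (hg.hasDerivAt_px t x y) (h t x y).ne').deriv

theorem hasDerivAt_px_px_log (hf : SmoothThree f) (h : ∀ t x y, 0 < f t x y) (t x y : ℝ) :
    HasDerivAt (fun s => _root_.px (_root_.px fun d e k => Real.log (f d e k)) t s y)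
      (_root_.px (_root_.px (_root_.px f)) t x y / f t x y
        - 3 * _root_.px (_root_.px f) t x y * _root_.px f t x y / f t x y ^ 2
        + 2 * _root_.px f t x y ^ 3 / f t x y ^ 3) x := by
  rw [hf.px_log h, hf.px.px_div hf h]
  have h0 := (h t x y).ne'
  have d0 := hf.hasDerivAt_px t x y
  have d1 := hf.px.hasDerivAt_px t x y
  have d2 := hf.px.px.hasDerivAt_px t x y
  refine (((d2.mul d0).sub (d1.mul d1)).div (d0.pow 2) (pow_ne_zero 2 h0)).congr_deriv ?_
  simp
  field_simp
  ring

end SmoothThree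

/-- scalar identity from the time part of the bilinear Bäcklund
transformation for KP-II. -/
theorem bilinear_backlund_time_identity
    (τ₁ τ₂ : ℝ → ℝ → ℝ → ℝ)
    (hτ₁ : ContDiff ℝ (⊤ : ℕ∞) fun p : ℝ × ℝ × ℝ => τ₁ p.1 p.2.1 p.2.2)
    (hτ₂ : ContDiff ℝ (⊤ : ℕ∞) fun p : ℝ × ℝ × ℝ => τ₂ p.1 p.2.1 p.2.2)
    (hpos₁ : ∀ t x y, 0 < τ₁ t x y) (hpos₂ : ∀ t x y, 0 < τ₂ t x y)
    (hBT₁ : ∀ t x y,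
      τ₁ t x y * px (px τ₂) t x y - 2 * px τ₁ t x y * px τ₂ t x y
        + τ₂ t x y * px (px τ₁) t x y + τ₂ t x y * py τ₁ t x y
        - τ₁ t x y * py τ₂ t x y = 0)
    (hBT₂ : ∀ t x y,
      4 * (τ₁ t x y * pt τ₂ t x y - τ₂ t x y * pt τ₁ t x y)
        + 3 * (τ₁ t x y * px (py τ₂) t x y - px τ₁ t x y * py τ₂ t x y
            - py τ₁ t x y * px τ₂ t x y + τ₂ t x y * px (py τ₁) t x y)
        + τ₁ t x y * px (px (px τ₂)) t x y
        - 3 * px τ₁ t x y * px (px τ₂) t x y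
        + 3 * px (px τ₁) t x y * px τ₂ t x y
        - τ₂ t x y * px (px (px τ₁)) t x y = 0) :
    ∀ t x y,
      4 * pt (fun a b c => Real.log (τ₂ a b c / τ₁ a b c)) t x y
        + px (fun a b c =>
            2 * (2 * px (px fun d e f => Real.log (τ₂ d e f)) a b c)
              + 2 * px (px fun d e f => Real.log (τ₁ d e f)) a b c) t x y
        + 6 * px (fun a b c => py τ₁ a b c / τ₁ a b c) t x y
        + 6 * px (fun a b c => Real.log (τ₂ a b c / τ₁ a b c)) t x y
            * (2 * px (px fun d e f => Real.log (τ₂ d e f)) t x y)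
        + 4 * (px (fun a b c => Real.log (τ₂ a b c / τ₁ a b c)) t x y)^3 = 0 := by
  intro t x y
  replace hτ₁ : SmoothThree τ₁ := hτ₁
  replace hτ₂ : SmoothThree τ₂ := hτ₂
  have h₁ := (hpos₁ t x y).ne'
  have h₂ := (hpos₂ t x y).ne'
  have hlog : (fun a b c => Real.log (τ₂ a b c / τ₁ a b c)) =
      fun a b c => Real.log (τ₂ a b c) - Real.log (τ₁ a b c) := by
    funext a b c
    exact Real.log_div (hpos₂ a b c).ne' (hpos₁ a b c).ne'
  have ht : pt (fun a b c => Real.log (τ₂ a b c) - Real.log (τ₁ a b c)) t x y =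
      pt τ₂ t x y / τ₂ t x y - pt τ₁ t x y / τ₁ t x y :=
    (((hτ₂.hasDerivAt_pt t x y).log h₂).sub ((hτ₁.hasDerivAt_pt t x y).log h₁)).deriv
  have hx : px (fun a b c => Real.log (τ₂ a b c) - Real.log (τ₁ a b c)) t x y =
      px τ₂ t x y / τ₂ t x y - px τ₁ t x y / τ₁ t x y :=
    (((hτ₂.hasDerivAt_px t x y).log h₂).sub ((hτ₁.hasDerivAt_px t x y).log h₁)).deriv
  have hu : px (fun a b c =>
      2 * (2 * px (px fun d e f => Real.log (τ₂ d e f)) a b c)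
        + 2 * px (px fun d e f => Real.log (τ₁ d e f)) a b c) t x y = _ :=
    ((((hτ₂.hasDerivAt_px_px_log hpos₂ t x y).const_mul 2).const_mul 2).add
    ((hτ₁.hasDerivAt_px_px_log hpos₁ t x y).const_mul 2)).deriv
  have hBTx : _ = (0 : ℝ) :=
    (((((((hτ₁.hasDerivAt_px t x y).mul (hτ₂.px.px.hasDerivAt_px t x y)).sub
      (((hτ₁.px.hasDerivAt_px t x y).const_mul 2).mul (hτ₂.px.hasDerivAt_px t x y))).add
      ((hτ₂.hasDerivAt_px t x y).mul (hτ₁.px.px.hasDerivAt_px t x y))).add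
      ((hτ₂.hasDerivAt_px t x y).mul (hτ₁.py.hasDerivAt_px t x y))).sub
      ((hτ₁.hasDerivAt_px t x y).mul (hτ₂.py.hasDerivAt_px t x y))).congr_of_eventuallyEq
      (Filter.Eventually.of_forall fun s => (hBT₁ t s y).symm)).unique (hasDerivAt_const x (0 : ℝ))
  have hBT := hBT₁ t x y
  have hBTt := hBT₂ t x y
  rw [hlog, ht, hx, hu, hτ₁.py.px_div hτ₁ hpos₁, hτ₂.px_log hpos₂, hτ₂.px.px_div hτ₂ hpos₂]
  clear hu hlog ht hx hBT₁ hBT₂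
  simp only at hBTx ⊢
  generalize px (px (px τ₁)) t x y = f₃ at *
  generalize px (px (px τ₂)) t x y = g₃ at *
  generalize px (px τ₁) t x y = f₂ at *
  generalize px (px τ₂) t x y = g₂ at *
  generalize px (py τ₁) t x y = p' at *
  generalize px (py τ₂) t x y = q' at *
  generalize px τ₁ t x y = f₁ at *
  generalize px τ₂ t x y = g₁ at *
  generalize py τ₁ t x y = p at *
  generalize py τ₂ t x y = q at *
  generalize pt τ₁ t x y = r at *
  generalize pt τ₂ t x y = s at *
  generalize τ₁ t x y = f at *
  generalize τ₂ t x y = g at *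
  have hq : q = (f * g₂ - 2 * f₁ * g₁ + g * f₂ + g * p) / f := by
    field_simp
    linear_combination -hBT
  have hq' : q' = (f₁ * g₂ + f * g₃ - 2 * f₂ * g₁ - 2 * f₁ * g₂ + g₁ * f₂ + g * f₃
      + g₁ * p + g * p' - f₁ * q) / f := by
    field_simp
    linear_combination -hBTx
  have hs : s = (4 * g * r - 3 * (f * q' - f₁ * q - p * g₁ + g * p') - f * g₃
      + 3 * f₁ * g₂ - 3 * f₂ * g₁ + g * f₃) / (4 * f) := by
    field_simp
    linear_combination hBTt
  rw [hs, hq', hq]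
  field_simp
  ring
end

section
/- Let κ₁ < κ₂ < κ₃ < κ₄ be reals with κ₂ + κ₃ ≠ κ₁ + κ₄, let a₂₃ = (κ₂+κ₃)/2, a₁₄ = (κ₁+κ₄)/2, and b₂ = 2(a₂₃ + a₁₄) + (κ₁κ₄ − κ₂κ₃)/(2(a₂₃ − a₁₄)). Then: if a₁₄ > a₂₃, one has b₂ > κ₂ + 2κ₃ and b₂ > 2κ₁ + κ₄; and if a₁₄ < a₂₃, one has b₂ < 2κ₂ + κ₃ and b₂ < κ₁ + 2κ₄. -/
/-- bounds on the transverse speed b₂ for P-type 2-line solitons. -/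
theorem b2_bounds_P_type
    (κ₁ κ₂ κ₃ κ₄ a₂₃ a₁₄ b₂ : ℝ)
    (h12 : κ₁ < κ₂) (h23 : κ₂ < κ₃) (h34 : κ₃ < κ₄)
    (hne : κ₂ + κ₃ ≠ κ₁ + κ₄)
    (ha23 : a₂₃ = (κ₂ + κ₃)/2) (ha14 : a₁₄ = (κ₁ + κ₄)/2)
    (hb₂ : b₂ = 2*(a₂₃ + a₁₄) + (κ₁*κ₄ - κ₂*κ₃)/(2*(a₂₃ - a₁₄))) :
    (a₂₃ < a₁₄ → κ₂ + 2*κ₃ < b₂ ∧ 2*κ₁ + κ₄ < b₂)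
    ∧ (a₁₄ < a₂₃ → b₂ < 2*κ₂ + κ₃ ∧ b₂ < κ₁ + 2*κ₄) := by
  subst ha23 ha14 hb₂
  have hs : κ₂ + κ₃ - (κ₁ + κ₄) ≠ 0 := sub_ne_zero.mpr hne
  have hd : 2 * ((κ₂ + κ₃) / 2 - (κ₁ + κ₄) / 2) = κ₂ + κ₃ - (κ₁ + κ₄) := by ring
  have hsum : 2 * ((κ₂ + κ₃) / 2 + (κ₁ + κ₄) / 2) = κ₂ + κ₃ + (κ₁ + κ₄) := by ring
  rw [hd, hsum]
  refine ⟨fun h => ?_, fun h => ?_⟩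
  · have hpos : 0 < κ₁ + κ₄ - (κ₂ + κ₃) := by linarith
    have hfrac_pos : 0 < (κ₃ - κ₁) * (κ₂ - κ₁) / (κ₁ + κ₄ - (κ₂ + κ₃)) :=
      div_pos (mul_pos (by linarith) (by linarith)) hpos
    have hfrac : (κ₁ * κ₄ - κ₂ * κ₃) / (κ₂ + κ₃ - (κ₁ + κ₄)) =
        (κ₃ - κ₁) * (κ₂ - κ₁) / (κ₁ + κ₄ - (κ₂ + κ₃)) - κ₁ := by
      have := hpos.ne'
      rw [div_sub' this, div_eq_div_iff hs this]
      ring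
    rw [hfrac]
    constructor <;> linarith
  · have hpos : 0 < κ₂ + κ₃ - (κ₁ + κ₄) := by linarith
    have hfrac_pos : 0 < (κ₄ - κ₂) * (κ₄ - κ₃) / (κ₂ + κ₃ - (κ₁ + κ₄)) :=
      div_pos (mul_pos (by linarith) (by linarith)) hpos
    have hfrac : (κ₁ * κ₄ - κ₂ * κ₃) / (κ₂ + κ₃ - (κ₁ + κ₄)) =
        -κ₄ - (κ₄ - κ₂) * (κ₄ - κ₃) / (κ₂ + κ₃ - (κ₁ + κ₄)) := by
      rw [sub_div' hs]
      congr 1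
      ring
    rw [hfrac]
    constructor <;> linarith
end

section
/- Let κ₁ < κ₂ < κ₃ < κ₄ be reals, let a₁₂ = (κ₁+κ₂)/2, a₃₄ = (κ₃+κ₄)/2 (so a₃₄ > a₁₂), and b₂ = 2(a₁₂ + a₃₄) + (κ₁κ₂ − κ₃κ₄)/(2(a₃₄ − a₁₂)). Then b₂ > κ₁ + 2κ₂ and b₂ < 2κ₃ + κ₄. -/
/-- bounds on the transverse speed b₂ for O-type 2-line solitons. -/
theorem b2_bounds_O_type
    (κ₁ κ₂ κ₃ κ₄ a₁₂ a₃₄ b₂ : ℝ)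
    (h12 : κ₁ < κ₂) (h23 : κ₂ < κ₃) (h34 : κ₃ < κ₄)
    (ha12 : a₁₂ = (κ₁ + κ₂)/2) (ha34 : a₃₄ = (κ₃ + κ₄)/2)
    (hb₂ : b₂ = 2*(a₁₂ + a₃₄) + (κ₁*κ₂ - κ₃*κ₄)/(2*(a₃₄ - a₁₂))) :
    κ₁ + 2*κ₂ < b₂ ∧ b₂ < 2*κ₃ + κ₄ := by
  have hD : 0 < κ₃ + κ₄ - κ₁ - κ₂ := by linarith
  have hden : 2 * (a₃₄ - a₁₂) = κ₃ + κ₄ - κ₁ - κ₂ := by rw [ha12, ha34]; ring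
  rw [hden] at hb₂
  have hp : 0 < κ₃ - κ₂ := sub_pos.2 h23
  have hq : 0 < κ₄ - κ₂ := sub_pos.2 (h23.trans h34)
  have hr : 0 < κ₂ - κ₁ := sub_pos.2 h12
  have hv : 0 < κ₃ - κ₁ := sub_pos.2 (h12.trans h23)
  have hw : 0 < κ₄ - κ₃ := sub_pos.2 h34
  have lower : b₂ - (κ₁ + 2 * κ₂) =
      ((κ₃ - κ₂) ^ 2 + (κ₃ - κ₂) * (κ₄ - κ₂) + (κ₄ - κ₂) ^ 2
        + (κ₂ - κ₁) * ((κ₃ - κ₂) + (κ₄ - κ₂))) / (κ₃ + κ₄ - κ₁ - κ₂) := by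
    rw [hb₂, ha12, ha34]
    field_simp
    ring
  have upper : 2 * κ₃ + κ₄ - b₂ =
      ((κ₃ - κ₂) ^ 2 + (κ₃ - κ₂) * (κ₃ - κ₁) + (κ₃ - κ₁) ^ 2
        + (κ₄ - κ₃) * ((κ₃ - κ₂) + (κ₃ - κ₁))) / (κ₃ + κ₄ - κ₁ - κ₂) := by
    rw [hb₂, ha12, ha34]
    field_simp
    ring
  constructor
  · rw [← sub_pos, lower]
    positivity
  · rw [← sub_pos, upper]
    positivity
end

section
/- Let c > 0 and b ∈ ℝ. For η ∈ ℝ define λ_±(η) := iη(b ± γ_c(±η)), where γ_c(μ) is the principal square root of c + iμ. Then Re λ_±(0) = 0; Re λ_±(−η) = Re λ_±(η) for all η; Re λ_±(η) < 0 for every η ≠ 0; and η ↦ Re λ_±(η) is strictly decreasing on (0,∞) (equivalently, η·(d/dη)Re λ_±(η) < 0 for η ≠ 0). -/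
/-- principal square root of c + iμ -/
noncomputable def gam (c μ : ℝ) : ℂ := ((c : ℂ) + Complex.I * (μ : ℂ)) ^ ((1 : ℂ)/2)

/-- λ₊(η) = iη(b + γ_c(η)) -/
noncomputable def lamP (c b η : ℝ) : ℂ := Complex.I * (η : ℂ) * ((b : ℂ) + gam c η)

/-- λ₋(η) = iη(b − γ_c(−η)) -/
noncomputable def lamM (c b η : ℝ) : ℂ := Complex.I * (η : ℂ) * ((b : ℂ) - gam c (-η))

/-- The quantity `μ * Im √(c + iμ)`, which governs the real part of both eigenvalue curves. -/
theorem mul_gam_im (c μ : ℝ) :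
    μ * (gam c μ).im = |μ| * √((√(c ^ 2 + μ ^ 2) - c) / 2) := by
  have hnorm : ‖(c : ℂ) + Complex.I * (μ : ℂ)‖ = √(c ^ 2 + μ ^ 2) := by
    rw [mul_comm, Complex.norm_add_mul_I]
  have hre : ((c : ℂ) + Complex.I * (μ : ℂ)).re = c := by simp
  have him : ((c : ℂ) + Complex.I * (μ : ℂ)).im = μ := by simp
  rw [gam, one_div]
  rcases le_or_gt 0 μ with h | h
  · rw [Complex.cpow_inv_two_im_eq_sqrt (by rwa [him]), hnorm, hre, abs_of_nonneg h]
  · rw [Complex.cpow_inv_two_im_eq_neg_sqrt (by rwa [him]), hnorm, hre, abs_of_neg h]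
    ring

theorem lamP_re (c b η : ℝ) :
    (lamP c b η).re = -(|η| * √((√(c ^ 2 + η ^ 2) - c) / 2)) := by
  rw [← mul_gam_im]
  simp [lamP]

theorem lamM_re (c b η : ℝ) :
    (lamM c b η).re = -(|η| * √((√(c ^ 2 + η ^ 2) - c) / 2)) := by
  have h := mul_gam_im c (-η)
  rw [abs_neg, neg_sq] at h
  rw [← h]
  simp [lamM]

theorem strictMonoOn_abs_mul_sqrt (c : ℝ) :
    StrictMonoOn (fun η : ℝ => |η| * √((√(c ^ 2 + η ^ 2) - c) / 2)) (Set.Ici 0) := by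
  intro x hx y hy hxy
  rw [Set.mem_Ici] at hx hy
  have hcx : c ≤ √(c ^ 2 + x ^ 2) := Real.le_sqrt_of_sq_le (by nlinarith)
  have hlt : √(c ^ 2 + x ^ 2) < √(c ^ 2 + y ^ 2) :=
    Real.sqrt_lt_sqrt (by positivity) (by nlinarith)
  have hlt' : √((√(c ^ 2 + x ^ 2) - c) / 2) < √((√(c ^ 2 + y ^ 2) - c) / 2) :=
    Real.sqrt_lt_sqrt (by linarith) (by linarith)
  simp only [abs_of_nonneg hx, abs_of_nonneg hy]
  exact mul_lt_mul'' hxy hlt' hx (Real.sqrt_nonneg _)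

/-- properties of the curves of resonant continuous eigenvalues. -/
theorem resonant_eigenvalue_curves (c b : ℝ) (hc : 0 < c) :
    ((lamP c b 0).re = 0 ∧ (lamM c b 0).re = 0)
    ∧ (∀ η : ℝ, (lamP c b (-η)).re = (lamP c b η).re
        ∧ (lamM c b (-η)).re = (lamM c b η).re)
    ∧ (∀ η : ℝ, η ≠ 0 → (lamP c b η).re < 0 ∧ (lamM c b η).re < 0)
    ∧ (StrictAntiOn (fun η : ℝ => (lamP c b η).re) (Set.Ioi 0)
        ∧ StrictAntiOn (fun η : ℝ => (lamM c b η).re) (Set.Ioi 0)) := by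
  have hmono := strictMonoOn_abs_mul_sqrt c
  simp only [lamP_re, lamM_re, and_self, abs_neg, neg_sq, implies_true, true_and]
  refine ⟨by simp, fun η hη => ?_, (hmono.mono Set.Ioi_subset_Ici_self).neg⟩
  have h := hmono (Set.mem_Ici.2 le_rfl) (Set.mem_Ici.2 (abs_nonneg η)) (abs_pos.2 hη)
  simpa using h
end

section
/- P-type setup: let κ₁ < κ₂ < κ₃ < κ₄, a₂₃ = (κ₂+κ₃)/2, a₁₄ = (κ₁+κ₄)/2, c₂₃ = (κ₃−κ₂)²/4, c₁₄ = (κ₄−κ₁)²/4, and let (b₁,b₂) solve b₁ + 2a₂₃b₂ = ω₂₃, b₁ + 2a₁₄b₂ = ω₁₄. Assume 0 < α < min{√c₂₃, c₁₄/(3|a₁₄−a₂₃|), κ₂−κ₁, κ₄−κ₃} (in particular a₁₄ ≠ a₂₃) and α ≠ ±((b₂−3a₁₄)² − c₁₄)/(2(a₁₄−a₂₃)). Set η_I := 2(a₂₃−a₁₄)α, λ_{2,±}(η) := iη(b₂ − 3a₁₄ ± γ_{c₁₄}(±η)) for η = η_R + iη_I, η'₊ := 2(√c₁₄+α)√(α(α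 + 2a₂₃ − 2κ₁)) and η'₋ := 2(√c₁₄+α)√(α(α + 2κ₄ − 2a₂₃)). Then: (i) Re λ_{2,±}(η_R + iη_I) is an even function of η_R, strictly decreasing for η_R > 0; (ii) Re λ_{2,+}(η'₊ + iη_I) = −(3(a₂₃−κ₁)² + c₂₃)α − 6(a₂₃−κ₁)α² − 2α³ < 0 and Re λ_{2,−}(η'₋ + iη_I) = −(3(κ₄−a₂₃)² + c₂₃)α − 6(κ₄−a₂₃)α² − 2α³ < 0; (iii) if ±(a₁₄ − a₂₃) > 0 then there exists η̃ ∈ (0, η'_±) with Re λ_{2,±}(η̃ + iη_I) = 0; (iv) λ_{2,±}(η_R + iη_I) ≠ 0 for every η_R ∈ ℝ; (v) (a₁₄ − a₂₃)(Re λ_{2,+}(η_R + iη_I) − Re λ_{2,−}(η_R + iη_I)) > 0 for every η_R ∈ ℝ. -/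
/-- principal square root of c + iμ, μ complex -/
noncomputable def gamC (c : ℝ) (μ : ℂ) : ℂ := ((c : ℂ) + Complex.I * μ) ^ ((1 : ℂ)/2)

/-- λ₊(η) = iη(b + γ_c(η)) for complex η -/
noncomputable def lamCP (c b : ℝ) (η : ℂ) : ℂ := Complex.I * η * ((b : ℂ) + gamC c η)

/-- λ₋(η) = iη(b − γ_c(−η)) for complex η -/
noncomputable def lamCM (c b : ℝ) (η : ℂ) : ℂ := Complex.I * η * ((b : ℂ) - gamC c (-η))

/-- η_R ↦ Re λ₊(η_R + iη_I) -/
noncomputable def reP (c b ηI : ℝ) (s : ℝ) : ℝ :=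
  (lamCP c b ((s : ℂ) + (ηI : ℂ) * Complex.I)).re

/-- η_R ↦ Re λ₋(η_R + iη_I) -/
noncomputable def reM (c b ηI : ℝ) (s : ℝ) : ℝ :=
  (lamCM c b ((s : ℂ) + (ηI : ℂ) * Complex.I)).re

theorem gamC_eq_of_sq {c u v : ℝ} {μ : ℂ} (hu : 0 < u)
    (h : (c : ℂ) + Complex.I * μ = ((u : ℂ) + v * Complex.I) ^ 2) :
    gamC c μ = (u : ℂ) + v * Complex.I := by
  rw [gamC, h, one_div]
  exact Complex.sq_cpow_two_inv (by simpa using hu)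

theorem exists_sqrt_coords {A : ℝ} (hA : 0 < A) (s : ℝ) :
    ∃ u v : ℝ, 0 < u ∧ u ^ 2 - v ^ 2 = A ∧ 2 * u * v = s := by
  have hr : 0 ≤ A ^ 2 + s ^ 2 := by positivity
  have hAr : 0 < A + √(A ^ 2 + s ^ 2) := by positivity
  have hu : 0 < √((A + √(A ^ 2 + s ^ 2)) / 2) := by positivity
  have hu2 := Real.sq_sqrt (show 0 ≤ (A + √(A ^ 2 + s ^ 2)) / 2 by positivity)
  have hr2 := Real.sq_sqrt hr
  refine ⟨√((A + √(A ^ 2 + s ^ 2)) / 2), s / (2 * √((A + √(A ^ 2 + s ^ 2)) / 2)), hu, ?_, ?_⟩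
  · rw [div_pow, mul_pow, hu2]
    field_simp
    linear_combination hr2
  · field_simp

theorem gamC_eq {c h s u v : ℝ} (hu : 0 < u) (h₁ : u ^ 2 - v ^ 2 = c - h) (h₂ : 2 * u * v = s) :
    gamC c ((s : ℂ) + (h : ℂ) * Complex.I) = (u : ℂ) + v * Complex.I := by
  apply gamC_eq_of_sq hu
  apply Complex.ext
  · simp [pow_two]
    linarith
  · simp [pow_two]
    linarith

theorem reP_eq {c b h s u v : ℝ} (hu : 0 < u) (h₁ : u ^ 2 - v ^ 2 = c - h)
    (h₂ : 2 * u * v = s) :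
    reP c b h s = -(h * b) + (2 * c - 3 * h) * u - 2 * u ^ 3 := by
  rw [reP, lamCP, gamC_eq hu h₁ h₂]
  simp
  linear_combination v * h₂ + 2 * u * h₁

theorem reP_neg {c h : ℝ} (hc : h < c) (b s : ℝ) : reP c b h (-s) = reP c b h s := by
  obtain ⟨u, v, hu, h₁, h₂⟩ := exists_sqrt_coords (sub_pos.2 hc) s
  rw [reP_eq hu h₁ h₂, reP_eq (v := -v) hu (by linarith) (by linarith)]

theorem lamCM_eq_lamCP (c b : ℝ) (η : ℂ) : lamCM c b η = lamCP c (-b) (-η) := by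
  simp only [lamCM, lamCP]
  push_cast
  ring

theorem reM_eq_reP {c h : ℝ} (hc : -h < c) (b s : ℝ) : reM c b h s = reP c (-b) (-h) s := by
  rw [← reP_neg hc, reM, lamCM_eq_lamCP, reP]
  congr 3
  push_cast
  ring

theorem strictAntiOn_reP {c h : ℝ} (hc : h < c) (hc' : 3 * h < 4 * c) (b : ℝ) :
    StrictAntiOn (reP c b h) (Set.Ioi 0) := by
  intro s hs t _ hst
  obtain ⟨u, v, hu, h₁, h₂⟩ := exists_sqrt_coords (sub_pos.2 hc) s
  obtain ⟨x, y, hx, k₁, k₂⟩ := exists_sqrt_coords (sub_pos.2 hc) t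
  have hs : 0 < s := hs
  have hv : 0 < v := by
    by_contra! hv
    nlinarith
  have hy : 0 < y := by
    by_contra! hy
    nlinarith
  have hux : u < x := by
    by_contra! hxu
    have : y ≤ v := by nlinarith
    nlinarith
  rw [reP_eq hu h₁ h₂, reP_eq hx k₁ k₂]
  have hpos : 0 < 2 * (u ^ 2 + u * x + x ^ 2) - (2 * c - 3 * h) := by nlinarith
  nlinarith [mul_pos (sub_pos.2 hux) hpos]

theorem continuous_reP {c h : ℝ} (hc : h < c) (b : ℝ) : Continuous (reP c b h) := by
  have hg : Continuous fun s : ℝ => gamC c ((s : ℂ) + (h : ℂ) * Complex.I) := by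
    unfold gamC
    apply Continuous.cpow
    · fun_prop
    · fun_prop
    · intro s
      left
      simpa using hc
  unfold reP lamCP
  fun_prop

theorem lamCP_ne_zero {c b h : ℝ} (hc : h < c) (hh : h ≠ 0) (hb : b ^ 2 ≠ c - h) (s : ℝ) :
    lamCP c b ((s : ℂ) + (h : ℂ) * Complex.I) ≠ 0 := by
  obtain ⟨u, v, hu, h₁, h₂⟩ := exists_sqrt_coords (sub_pos.2 hc) s
  rw [lamCP, gamC_eq hu h₁ h₂]
  refine mul_ne_zero (mul_ne_zero Complex.I_ne_zero fun h0 => hh ?_) fun h0 => hb ?_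
  · simpa using congrArg Complex.im h0
  · have hre := congrArg Complex.re h0
    have him := congrArg Complex.im h0
    simp at hre him
    rw [him] at h₁
    rw [← h₁, eq_neg_of_add_eq_zero_left hre]
    ring

theorem reP_neg_neg_lt_reP {c h : ℝ} (hc : -h < c) (h0 : h < 0) (b s : ℝ) :
    reP c (-b) (-h) s < reP c b h s := by
  wlog hs : 0 ≤ s generalizing s
  · have := this (-s) (by linarith)
    rwa [reP_neg hc, reP_neg (by linarith)] at this
  obtain ⟨u, v, hu, h₁, h₂⟩ := exists_sqrt_coords (A := c - h) (by linarith) s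
  obtain ⟨x, y, hx, k₁, k₂⟩ := exists_sqrt_coords (A := c - -h) (by linarith) s
  have hv : 0 ≤ v := by
    by_contra! hv
    nlinarith
  have hy : 0 ≤ y := by
    by_contra! hy
    nlinarith
  have hvy : v ≤ y := by
    by_contra! hyv
    have : x < u := by nlinarith
    nlinarith
  have e₁ : reP c b h s = -(h * b) - h * u - s * v := by
    rw [reP_eq hu h₁ h₂]
    linear_combination -v * h₂ - 2 * u * h₁
  have e₂ : reP c (-b) (-h) s = -(h * b) + h * x - s * y := by
    rw [reP_eq hx k₁ k₂]
    linear_combination -y * k₂ - 2 * x * k₁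
  rw [e₁, e₂]
  nlinarith [mul_pos (neg_pos.2 h0) (add_pos hu hx), mul_le_mul_of_nonneg_left hvy hs]

theorem reP_endpoint {κ₁ κ₂ κ₃ κ₄ b₁ b₂ α : ℝ} (h12 : κ₁ < κ₂) (h23 : κ₂ < κ₃) (h34 : κ₃ < κ₄)
    (hb1 : b₁ + (κ₂ + κ₃) * b₂ = κ₂ ^ 2 + κ₂ * κ₃ + κ₃ ^ 2)
    (hb2 : b₁ + (κ₁ + κ₄) * b₂ = κ₁ ^ 2 + κ₁ * κ₄ + κ₄ ^ 2) (hα0 : 0 < α) :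
    reP ((κ₄ - κ₁) ^ 2 / 4) (b₂ - 3 * ((κ₁ + κ₄) / 2)) ((κ₂ + κ₃ - κ₁ - κ₄) * α)
        (2 * ((κ₄ - κ₁) / 2 + α) * √(α * (α + κ₂ + κ₃ - 2 * κ₁)))
      = -(3 * ((κ₂ + κ₃) / 2 - κ₁) ^ 2 + (κ₃ - κ₂) ^ 2 / 4) * α
        - 6 * ((κ₂ + κ₃) / 2 - κ₁) * α ^ 2 - 2 * α ^ 3 := by
  have hsq := Real.sq_sqrt (show 0 ≤ α * (α + κ₂ + κ₃ - 2 * κ₁) from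
    mul_nonneg hα0.le (by linarith))
  rw [reP_eq (u := (κ₄ - κ₁) / 2 + α) (v := √(α * (α + κ₂ + κ₃ - 2 * κ₁))) (by linarith)
    (by rw [hsq]; ring) rfl]
  linear_combination α * hb2 - α * hb1

theorem exists_reP_eq_zero {κ₁ κ₂ κ₃ κ₄ b₁ b₂ α t : ℝ} (h12 : κ₁ < κ₂) (h23 : κ₂ < κ₃)
    (h34 : κ₃ < κ₄)
    (hb1 : b₁ + (κ₂ + κ₃) * b₂ = κ₂ ^ 2 + κ₂ * κ₃ + κ₃ ^ 2)
    (hb2 : b₁ + (κ₁ + κ₄) * b₂ = κ₁ ^ 2 + κ₁ * κ₄ + κ₄ ^ 2) (hα0 : 0 < α)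
    (hd : κ₂ + κ₃ < κ₁ + κ₄) (ht : 0 ≤ t)
    (hneg : reP ((κ₄ - κ₁) ^ 2 / 4) (b₂ - 3 * ((κ₁ + κ₄) / 2))
      ((κ₂ + κ₃ - κ₁ - κ₄) * α) t < 0) :
    ∃ s ∈ Set.Ioo 0 t, reP ((κ₄ - κ₁) ^ 2 / 4) (b₂ - 3 * ((κ₁ + κ₄) / 2))
      ((κ₂ + κ₃ - κ₁ - κ₄) * α) s = 0 := by
  have hh : (κ₂ + κ₃ - κ₁ - κ₄) * α < 0 := mul_neg_of_neg_of_pos (by linarith) hα0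
  have hc : (κ₂ + κ₃ - κ₁ - κ₄) * α < (κ₄ - κ₁) ^ 2 / 4 := hh.trans_le (by positivity)
  refine intermediate_value_Ioo' ht (continuous_reP hc _).continuousOn ⟨hneg, ?_⟩
  have hA : 0 < (κ₄ - κ₁) ^ 2 / 4 - (κ₂ + κ₃ - κ₁ - κ₄) * α := sub_pos.2 hc
  have hsq := Real.sq_sqrt hA.le
  have hpos := Real.sqrt_pos.2 hA
  rw [reP_eq (v := 0) hpos (by rw [hsq]; ring) (by ring)]
  have hu : (κ₄ - κ₁) / 2 < √((κ₄ - κ₁) ^ 2 / 4 - (κ₂ + κ₃ - κ₁ - κ₄) * α) := by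
    apply Real.lt_sqrt_of_sq_lt
    linarith
  generalize √((κ₄ - κ₁) ^ 2 / 4 - (κ₂ + κ₃ - κ₁ - κ₄) * α) = u at *
  have hbu : 0 < (b₂ - 3 * ((κ₁ + κ₄) / 2)) + (κ₄ - κ₁) / 2 := by
    have hD : 0 < κ₁ + κ₄ - κ₂ - κ₃ := by linarith
    refine pos_of_mul_pos_right ?_ hD.le
    have : (κ₁ + κ₄ - κ₂ - κ₃) * ((b₂ - 3 * ((κ₁ + κ₄) / 2)) + (κ₄ - κ₁) / 2)
      = κ₁ ^ 2 + κ₁ * κ₄ + κ₄ ^ 2 - (κ₂ ^ 2 + κ₂ * κ₃ + κ₃ ^ 2)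
        - (κ₁ + κ₄ - κ₂ - κ₃) * (2 * κ₁ + κ₄) := by
      linear_combination hb2 - hb1
    rw [this]
    nlinarith [mul_pos (sub_pos.2 h12) (sub_pos.2 h23), mul_pos (sub_pos.2 h12) (sub_pos.2 h34),
      mul_pos (sub_pos.2 h23) (sub_pos.2 h34), mul_pos (sub_pos.2 h12) hD,
      mul_pos (sub_pos.2 h23) hD, mul_pos (sub_pos.2 h34) hD]
  have e : -((κ₂ + κ₃ - κ₁ - κ₄) * α * (b₂ - 3 * ((κ₁ + κ₄) / 2)))
      + (2 * ((κ₄ - κ₁) ^ 2 / 4) - 3 * ((κ₂ + κ₃ - κ₁ - κ₄) * α)) * u - 2 * u ^ 3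
      = -((κ₂ + κ₃ - κ₁ - κ₄) * α) * (b₂ - 3 * ((κ₁ + κ₄) / 2) + u) := by
    linear_combination -2 * u * hsq
  rw [e]
  exact mul_pos (neg_pos.2 hh) (by linarith)

/-- resonant continuous eigenvalues λ_{2,±}(η_R + iη_I)
associated with the [1,4]-soliton of a P-type 2-line soliton, viewed in the
weighted space with weight e^{2αz₁}. -/
theorem resonant_eigenvalues_14_soliton_P
    (κ₁ κ₂ κ₃ κ₄ a₂₃ a₁₄ c₂₃ c₁₄ ω₂₃ ω₁₄ b₁ b₂ α : ℝ)
    (h12 : κ₁ < κ₂) (h23 : κ₂ < κ₃) (h34 : κ₃ < κ₄)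
    (ha23 : a₂₃ = (κ₂ + κ₃)/2) (ha14 : a₁₄ = (κ₁ + κ₄)/2)
    (hc23 : c₂₃ = (κ₃ - κ₂)^2/4) (hc14 : c₁₄ = (κ₄ - κ₁)^2/4)
    (hω23 : ω₂₃ = κ₂^2 + κ₂*κ₃ + κ₃^2) (hω14 : ω₁₄ = κ₁^2 + κ₁*κ₄ + κ₄^2)
    (hb1 : b₁ + 2*a₂₃*b₂ = ω₂₃) (hb2 : b₁ + 2*a₁₄*b₂ = ω₁₄)
    (hα0 : 0 < α) (hα1 : α < Real.sqrt c₂₃)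
    (hα2 : α < c₁₄/(3*|a₁₄ - a₂₃|))
    (hα3 : α < κ₂ - κ₁) (hα4 : α < κ₄ - κ₃)
    (hα5 : α ≠ ((b₂ - 3*a₁₄)^2 - c₁₄)/(2*(a₁₄ - a₂₃)))
    (hα6 : α ≠ -(((b₂ - 3*a₁₄)^2 - c₁₄)/(2*(a₁₄ - a₂₃)))) :
    ((∀ ηR : ℝ,
        reP c₁₄ (b₂ - 3*a₁₄) (2*(a₂₃ - a₁₄)*α) (-ηR)
          = reP c₁₄ (b₂ - 3*a₁₄) (2*(a₂₃ - a₁₄)*α) ηR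
        ∧ reM c₁₄ (b₂ - 3*a₁₄) (2*(a₂₃ - a₁₄)*α) (-ηR)
          = reM c₁₄ (b₂ - 3*a₁₄) (2*(a₂₃ - a₁₄)*α) ηR)
      ∧ StrictAntiOn (reP c₁₄ (b₂ - 3*a₁₄) (2*(a₂₃ - a₁₄)*α)) (Set.Ioi 0)
      ∧ StrictAntiOn (reM c₁₄ (b₂ - 3*a₁₄) (2*(a₂₃ - a₁₄)*α)) (Set.Ioi 0))
    ∧ (reP c₁₄ (b₂ - 3*a₁₄) (2*(a₂₃ - a₁₄)*α)
          (2*(Real.sqrt c₁₄ + α)*Real.sqrt (α*(α + 2*a₂₃ - 2*κ₁)))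
        = -(3*(a₂₃ - κ₁)^2 + c₂₃)*α - 6*(a₂₃ - κ₁)*α^2 - 2*α^3
      ∧ reP c₁₄ (b₂ - 3*a₁₄) (2*(a₂₃ - a₁₄)*α)
          (2*(Real.sqrt c₁₄ + α)*Real.sqrt (α*(α + 2*a₂₃ - 2*κ₁))) < 0
      ∧ reM c₁₄ (b₂ - 3*a₁₄) (2*(a₂₃ - a₁₄)*α)
          (2*(Real.sqrt c₁₄ + α)*Real.sqrt (α*(α + 2*κ₄ - 2*a₂₃)))
        = -(3*(κ₄ - a₂₃)^2 + c₂₃)*α - 6*(κ₄ - a₂₃)*α^2 - 2*α^3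
      ∧ reM c₁₄ (b₂ - 3*a₁₄) (2*(a₂₃ - a₁₄)*α)
          (2*(Real.sqrt c₁₄ + α)*Real.sqrt (α*(α + 2*κ₄ - 2*a₂₃))) < 0)
    ∧ ((0 < a₁₄ - a₂₃ →
          ∃ ηs ∈ Set.Ioo (0:ℝ)
              (2*(Real.sqrt c₁₄ + α)*Real.sqrt (α*(α + 2*a₂₃ - 2*κ₁))),
            reP c₁₄ (b₂ - 3*a₁₄) (2*(a₂₃ - a₁₄)*α) ηs = 0)
      ∧ (a₁₄ - a₂₃ < 0 →
          ∃ ηs ∈ Set.Ioo (0:ℝ)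
              (2*(Real.sqrt c₁₄ + α)*Real.sqrt (α*(α + 2*κ₄ - 2*a₂₃))),
            reM c₁₄ (b₂ - 3*a₁₄) (2*(a₂₃ - a₁₄)*α) ηs = 0))
    ∧ (∀ ηR : ℝ,
        lamCP c₁₄ (b₂ - 3*a₁₄) ((ηR : ℂ) + (2*(a₂₃ - a₁₄)*α : ℝ) * Complex.I) ≠ 0
        ∧ lamCM c₁₄ (b₂ - 3*a₁₄) ((ηR : ℂ) + (2*(a₂₃ - a₁₄)*α : ℝ) * Complex.I) ≠ 0)
    ∧ (∀ ηR : ℝ,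
        0 < (a₁₄ - a₂₃) *
          (reP c₁₄ (b₂ - 3*a₁₄) (2*(a₂₃ - a₁₄)*α) ηR
            - reM c₁₄ (b₂ - 3*a₁₄) (2*(a₂₃ - a₁₄)*α) ηR)) := by
  have hd : a₁₄ - a₂₃ ≠ 0 := by
    intro h0
    simp [h0] at hα2
    linarith
  have hdpos : 0 < |a₁₄ - a₂₃| := abs_pos.2 hd
  have hbound : |a₁₄ - a₂₃| * α * 3 < c₁₄ := by
    rw [lt_div_iff₀ (by positivity)] at hα2
    linarith
  have hle₁ := mul_le_mul_of_nonneg_right (le_abs_self (a₁₄ - a₂₃)) hα0.le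
  have hle₂ := mul_le_mul_of_nonneg_right (neg_le_abs (a₁₄ - a₂₃)) hα0.le
  have hcpos : 0 < c₁₄ := lt_of_le_of_lt (by positivity) hbound
  have hP : 2 * (a₂₃ - a₁₄) * α < c₁₄ := by linarith
  have hM : -(2 * (a₂₃ - a₁₄) * α) < c₁₄ := by linarith
  have hh : 2 * (a₂₃ - a₁₄) * α ≠ 0 :=
    mul_ne_zero (mul_ne_zero two_ne_zero fun h0 => hd (by linarith)) hα0.ne'
  have hsqrt : √c₁₄ = (κ₄ - κ₁) / 2 := by
    rw [hc14, show (κ₄ - κ₁) ^ 2 / 4 = ((κ₄ - κ₁) / 2) ^ 2 by ring]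
    exact Real.sqrt_sq (by linarith)
  have hB1 : b₁ + (κ₂ + κ₃) * b₂ = κ₂ ^ 2 + κ₂ * κ₃ + κ₃ ^ 2 := by
    rw [← hω23, ← hb1, ha23]
    ring
  have hB2 : b₁ + (κ₁ + κ₄) * b₂ = κ₁ ^ 2 + κ₁ * κ₄ + κ₄ ^ 2 := by
    rw [← hω14, ← hb2, ha14]
    ring
  have hB1' : b₁ + (-κ₃ + -κ₂) * -b₂ = (-κ₃) ^ 2 + -κ₃ * -κ₂ + (-κ₂) ^ 2 := by linarith
  have hB2' : b₁ + (-κ₄ + -κ₁) * -b₂ = (-κ₄) ^ 2 + -κ₄ * -κ₁ + (-κ₁) ^ 2 := by linarith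
  have reflect : ∀ s, reM c₁₄ (b₂ - 3 * a₁₄) (2 * (a₂₃ - a₁₄) * α) s
      = reP ((-κ₁ - -κ₄) ^ 2 / 4) (-b₂ - 3 * ((-κ₄ + -κ₁) / 2))
        ((-κ₃ + -κ₂ - -κ₄ - -κ₁) * α) s := by
    intro s
    rw [reM_eq_reP hM, hc14, ha14, ha23]
    congr 1 <;> ring
  have normP : ∀ s, reP c₁₄ (b₂ - 3 * a₁₄) (2 * (a₂₃ - a₁₄) * α) s
      = reP ((κ₄ - κ₁) ^ 2 / 4) (b₂ - 3 * ((κ₁ + κ₄) / 2)) ((κ₂ + κ₃ - κ₁ - κ₄) * α) s := by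
    intro s
    rw [hc14, ha14, ha23]
    congr 1
    ring
  have endP : reP c₁₄ (b₂ - 3*a₁₄) (2*(a₂₃ - a₁₄)*α)
      (2*(√c₁₄ + α)*√(α*(α + 2*a₂₃ - 2*κ₁)))
      = -(3*(a₂₃ - κ₁)^2 + c₂₃)*α - 6*(a₂₃ - κ₁)*α^2 - 2*α^3 := by
    rw [normP, hsqrt, show α + 2 * a₂₃ - 2 * κ₁ = α + κ₂ + κ₃ - 2 * κ₁ by rw [ha23]; ring,
      reP_endpoint h12 h23 h34 hB1 hB2 hα0, ha23, hc23]
  have endM : reM c₁₄ (b₂ - 3*a₁₄) (2*(a₂₃ - a₁₄)*α)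
      (2*(√c₁₄ + α)*√(α*(α + 2*κ₄ - 2*a₂₃)))
      = -(3*(κ₄ - a₂₃)^2 + c₂₃)*α - 6*(κ₄ - a₂₃)*α^2 - 2*α^3 := by
    rw [reflect, hsqrt,
      show α + 2 * κ₄ - 2 * a₂₃ = α + -κ₃ + -κ₂ - 2 * -κ₄ by rw [ha23]; ring,
      show (κ₄ - κ₁) / 2 = (-κ₁ - -κ₄) / 2 by ring,
      reP_endpoint (neg_lt_neg h34) (neg_lt_neg h23) (neg_lt_neg h12) hB1' hB2' hα0, ha23, hc23]
    ring
  have hc23pos : 0 ≤ c₂₃ := by rw [hc23]; positivity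
  have valueNeg : ∀ p : ℝ, 0 < p →
      -(3 * p ^ 2 + c₂₃) * α - 6 * p * α ^ 2 - 2 * α ^ 3 < 0 := by
    intro p hp
    have : 0 < (3 * p ^ 2 + c₂₃) * α + 6 * p * α ^ 2 + 2 * α ^ 3 := by positivity
    linarith
  have negP := endP.trans_lt (valueNeg (a₂₃ - κ₁) (by linarith))
  have negM := endM.trans_lt (valueNeg (κ₄ - a₂₃) (by linarith))
  refine ⟨⟨fun ηR => ⟨reP_neg hP _ _, ?_⟩, ?_, ?_⟩, ⟨endP, negP, endM, negM⟩, ⟨?_, ?_⟩,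
    fun ηR => ⟨?_, ?_⟩, fun ηR => ?_⟩
  · rw [reM_eq_reP hM, reM_eq_reP hM, reP_neg hM]
  · exact strictAntiOn_reP hP (by linarith) _
  · rw [funext (reM_eq_reP hM _)]
    exact strictAntiOn_reP hM (by linarith) _
  · intro hpos
    rw [normP] at negP
    simp only [normP]
    exact exists_reP_eq_zero h12 h23 h34 hB1 hB2 hα0 (by linarith) (by positivity) negP
  · intro hneg
    rw [reflect] at negM
    simp only [reflect]
    exact exists_reP_eq_zero (neg_lt_neg h34) (neg_lt_neg h23) (neg_lt_neg h12) hB1' hB2' hα0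
      (by linarith) (by positivity) negM
  · refine lamCP_ne_zero (b := b₂ - 3 * a₁₄) hP hh (fun hb => hα5 ?_) ηR
    rw [eq_div_iff (by simpa using hd), hb]
    ring
  · have := lamCP_ne_zero (b := -(b₂ - 3 * a₁₄)) hM (neg_ne_zero.2 hh) (fun hb => hα6 ?_) (-ηR)
    · rw [lamCM_eq_lamCP]
      convert this using 2
      push_cast
      ring
    · rw [← neg_div, eq_div_iff (by simpa using hd), ← neg_sq (b₂ - 3 * a₁₄), hb]
      ring
  · rw [reM_eq_reP hM]
    rcases hd.lt_or_gt with hlt | hgt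
    · refine mul_pos_of_neg_of_neg hlt (sub_neg.2 ?_)
      have hneg : -(2 * (a₂₃ - a₁₄) * α) < 0 := by
        linarith [mul_neg_of_neg_of_pos hlt hα0]
      simpa using reP_neg_neg_lt_reP (by simpa using hP) hneg (-(b₂ - 3 * a₁₄)) ηR
    · exact mul_pos hgt (sub_pos.2 (reP_neg_neg_lt_reP hM (by linarith [mul_pos hgt hα0]) _ _))
end

section
/- Let c > 0. Define u₀(z) := 2c·sech²(√c z), and for μ ∈ ℂ with |Im μ| < c let γ(μ) be the principal square root of c + iμ, g(z,μ) := (√c/γ(μ))·∂_z²(e^{−γ(μ)z} sech(√c z)) and g_M(z,μ) := (√c/γ(μ))·∂_z(e^{−γ(μ)z} sech(√c z)). Then ∂_z g_M(z,μ) = g(z,μ) and, for all z ∈ ℝ and all μ ∈ ℂ with |Im μ| < c, −(1/4)∂_z(∂_z²g(z,μ) − 4c·g(z,μ) + 6u₀(z)g(z,μ)) + (3/4)μ²·g_M(z,μ) = iμ·γ(μ)·g(z,μ). -/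
/-- g(z,μ) = (√c/γ(μ)) ∂_z²(e^{−γ(μ)z} sech(√c z)) -/
noncomputable def gFun (c : ℝ) (μ : ℂ) (z : ℝ) : ℂ :=
  ((Real.sqrt c : ℂ) / gamC c μ) *
    deriv (deriv fun w : ℝ =>
      Complex.exp (-gamC c μ * (w : ℂ)) * ((Real.cosh (Real.sqrt c * w) : ℝ) : ℂ)⁻¹) z

/-- g_M(z,μ) = (√c/γ(μ)) ∂_z(e^{−γ(μ)z} sech(√c z)) -/
noncomputable def gMFun (c : ℝ) (μ : ℂ) (z : ℝ) : ℂ :=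
  ((Real.sqrt c : ℂ) / gamC c μ) *
    deriv (fun w : ℝ =>
      Complex.exp (-gamC c μ * (w : ℂ)) * ((Real.cosh (Real.sqrt c * w) : ℝ) : ℂ)⁻¹) z

open Polynomial

/-- The function `e^{-γ z} sech(k z) Q(tanh(k z))` attached to a polynomial `Q`. -/
noncomputable def expSechTanh (γ : ℂ) (k : ℝ) (Q : ℂ[X]) (z : ℝ) : ℂ :=
  Complex.exp (-γ * (z : ℂ)) * ((Real.cosh (k * z) : ℝ) : ℂ)⁻¹ *
    Q.eval ((Real.tanh (k * z) : ℝ) : ℂ)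

/-- The action of `∂_z` on `expSechTanh γ k Q`, expressed on the polynomial `Q`. -/
noncomputable def expSechTanhDeriv (γ : ℂ) (k : ℝ) (Q : ℂ[X]) : ℂ[X] :=
  -C γ * Q - C (k : ℂ) * X * Q + C (k : ℂ) * (1 - X ^ 2) * derivative Q

lemma hasDerivAt_tanh_mul (k z : ℝ) :
    HasDerivAt (fun w : ℝ => Real.tanh (k * w)) (k * (1 - Real.tanh (k * z) ^ 2)) z := by
  have hpos := (Real.cosh_pos (k * z)).ne'
  have hlin : HasDerivAt (fun w : ℝ => k * w) k z := by
    simpa using (hasDerivAt_id z).const_mul k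
  have h := hlin.sinh.div hlin.cosh hpos
  have hfun : (fun w : ℝ => Real.tanh (k * w)) =
      (fun w : ℝ => Real.sinh (k * w)) / fun w : ℝ => Real.cosh (k * w) := by
    funext w
    simp [Real.tanh_eq_sinh_div_cosh]
  rw [hfun]
  refine h.congr_deriv ?_
  rw [Real.tanh_eq_sinh_div_cosh]
  field_simp

lemma hasDerivAt_sech_mul (k z : ℝ) :
    HasDerivAt (fun w : ℝ => (Real.cosh (k * w))⁻¹)
      (-(k * (Real.cosh (k * z))⁻¹ * Real.tanh (k * z))) z := by
  have hpos := (Real.cosh_pos (k * z)).ne'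
  have hlin : HasDerivAt (fun w : ℝ => k * w) k z := by
    simpa using (hasDerivAt_id z).const_mul k
  refine (hlin.cosh.fun_inv hpos).congr_deriv ?_
  rw [Real.tanh_eq_sinh_div_cosh]
  field_simp

lemma hasDerivAt_expSechTanh (γ : ℂ) (k : ℝ) (Q : ℂ[X]) (z : ℝ) :
    HasDerivAt (expSechTanh γ k Q) (expSechTanh γ k (expSechTanhDeriv γ k Q) z) z := by
  have hexp : HasDerivAt (fun w : ℝ => Complex.exp (-γ * (w : ℂ)))
      (Complex.exp (-γ * (z : ℂ)) * -γ) z := by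
    simpa using ((hasDerivAt_id z).ofReal_comp.const_mul (-γ)).cexp
  have hsech := (hasDerivAt_sech_mul k z).ofReal_comp
  have htanh := (hasDerivAt_tanh_mul k z).ofReal_comp
  have hpoly := (Q.hasDerivAt ((Real.tanh (k * z) : ℝ) : ℂ)).comp z htanh
  have h := (hexp.mul hsech).mul hpoly
  have hfun : expSechTanh γ k Q = ((fun w : ℝ => Complex.exp (-γ * (w : ℂ))) *
      fun w : ℝ => (((Real.cosh (k * w))⁻¹ : ℝ) : ℂ)) *
        ((fun x => Q.eval x) ∘ fun w : ℝ => ((Real.tanh (k * w) : ℝ) : ℂ)) := by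
    funext w
    simp [expSechTanh]
  rw [hfun]
  refine h.congr_deriv ?_
  simp only [expSechTanh, expSechTanhDeriv, eval_add, eval_sub, eval_mul, eval_neg, eval_C,
    eval_X, eval_pow, eval_one, Complex.ofReal_neg, Complex.ofReal_mul, Complex.ofReal_sub,
    Complex.ofReal_inv, Complex.ofReal_pow, Complex.ofReal_one, Pi.mul_apply,
    Function.comp_apply]
  ring

lemma deriv_expSechTanh (γ : ℂ) (k : ℝ) (Q : ℂ[X]) :
    deriv (expSechTanh γ k Q) = expSechTanh γ k (expSechTanhDeriv γ k Q) :=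
  funext fun z => (hasDerivAt_expSechTanh γ k Q z).deriv

lemma deriv_const_mul_expSechTanh (a γ : ℂ) (k : ℝ) (Q : ℂ[X]) :
    deriv (fun z => a * expSechTanh γ k Q z) =
      fun z => a * expSechTanh γ k (expSechTanhDeriv γ k Q) z :=
  funext fun z => ((hasDerivAt_expSechTanh γ k Q z).const_mul a).deriv

lemma expSechTanh_one (γ : ℂ) (k : ℝ) :
    expSechTanh γ k 1 = fun w : ℝ =>
      Complex.exp (-γ * (w : ℂ)) * ((Real.cosh (k * w) : ℝ) : ℂ)⁻¹ := by
  funext w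
  simp [expSechTanh]

lemma gMFun_eq_expSechTanh (c : ℝ) (μ : ℂ) :
    gMFun c μ = fun z => ((Real.sqrt c : ℂ) / gamC c μ) *
      expSechTanh (gamC c μ) (Real.sqrt c) (expSechTanhDeriv (gamC c μ) (Real.sqrt c) 1) z := by
  funext z
  rw [gMFun, ← expSechTanh_one, deriv_expSechTanh]

lemma gFun_eq_expSechTanh (c : ℝ) (μ : ℂ) :
    gFun c μ = fun z => ((Real.sqrt c : ℂ) / gamC c μ) *
      expSechTanh (gamC c μ) (Real.sqrt c) (expSechTanhDeriv (gamC c μ) (Real.sqrt c)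
        (expSechTanhDeriv (gamC c μ) (Real.sqrt c) 1)) z := by
  funext z
  rw [gFun, ← expSechTanh_one, deriv_expSechTanh, deriv_expSechTanh]

lemma gamC_sq (c : ℝ) (μ : ℂ) : gamC c μ ^ 2 = c + Complex.I * μ := by
  rw [gamC, one_div]
  exact_mod_cast Complex.cpow_nat_inv_pow ((c : ℂ) + Complex.I * μ) two_ne_zero

lemma inv_cosh_sq (x : ℝ) : (Real.cosh x ^ 2)⁻¹ = 1 - Real.tanh x ^ 2 := by
  have hpos := (Real.cosh_pos x).ne'
  rw [Real.tanh_eq_sinh_div_cosh]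
  field_simp
  linarith [Real.cosh_sq x]

/-- The operator `∂_z² - 4c + 12c sech²(k z)` on `expSechTanh`, expressed on polynomials. -/
lemma linearized_expSechTanh (a γ : ℂ) (k c : ℝ) (Q : ℂ[X]) (w : ℝ) :
    a * expSechTanh γ k (expSechTanhDeriv γ k (expSechTanhDeriv γ k Q)) w
        - 4 * (c : ℂ) * (a * expSechTanh γ k Q w)
        + 6 * ((2 * c / (Real.cosh (k * w)) ^ 2 : ℝ) : ℂ) * (a * expSechTanh γ k Q w) =
      a * expSechTanh γ k (expSechTanhDeriv γ k (expSechTanhDeriv γ k Q) - C (4 * (c : ℂ)) * Q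
        + C (12 * (c : ℂ)) * (1 - X ^ 2) * Q) w := by
  rw [div_eq_mul_inv, inv_cosh_sq]
  simp only [expSechTanh, eval_add, eval_sub, eval_mul, eval_C, eval_X, eval_pow, eval_one]
  push_cast
  ring

/-- resonant continuous eigenfunction relation for the
linearized KP-II operator around the line soliton u₀ = 2c sech²(√c z). -/
theorem resonant_eigenfunction_relation (c : ℝ) (hc : 0 < c) :
    ∀ (μ : ℂ) (z : ℝ), |μ.im| < c →
      deriv (gMFun c μ) z = gFun c μ z
      ∧ -(1/4 : ℂ) * deriv (fun w : ℝ =>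
            deriv (deriv (gFun c μ)) w - 4*(c : ℂ)*gFun c μ w
              + 6*((2*c/(Real.cosh (Real.sqrt c * w))^2 : ℝ) : ℂ) * gFun c μ w) z
          + (3/4 : ℂ) * μ^2 * gMFun c μ z
        = Complex.I * μ * gamC c μ * gFun c μ z := by
  intro μ z _
  have hsqrt : (c : ℂ) = (Real.sqrt c : ℂ) ^ 2 := by
    exact_mod_cast (Real.sq_sqrt hc.le).symm
  have hIμ : Complex.I * μ = gamC c μ ^ 2 - (Real.sqrt c : ℂ) ^ 2 := by
    rw [gamC_sq, ← hsqrt]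
    ring
  have hμ : μ ^ 2 = -(gamC c μ ^ 2 - (Real.sqrt c : ℂ) ^ 2) ^ 2 := by
    rw [← hIμ, mul_pow, Complex.I_sq]
    ring
  rw [gMFun_eq_expSechTanh, gFun_eq_expSechTanh, deriv_const_mul_expSechTanh]
  refine ⟨rfl, ?_⟩
  simp only [deriv_const_mul_expSechTanh, linearized_expSechTanh]
  rw [hIμ, hμ, hsqrt]
  generalize gamC c μ = γ
  generalize Real.sqrt c = k
  simp only [expSechTanh, expSechTanhDeriv, derivative_add, derivative_sub, derivative_mul,
    derivative_neg, derivative_C, derivative_X, derivative_X_pow, derivative_one, derivative_zero,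
    eval_add, eval_sub, eval_mul, eval_neg, eval_C, eval_X, eval_pow, eval_one, eval_zero]
  generalize ((Real.tanh (k * z) : ℝ) : ℂ) = t
  ring
end

section
/- Let a, b₁, b₂ ∈ ℝ, α > 0, and set c := b₁ + ab₂ − (3/4)a². Define p(ζ,μ) := (1/4)(ζ³ − 3μ²/ζ + 4b₁ζ + 4b₂μ) for ζ ∈ ℂ∖{0} and μ ∈ ℂ. Then for all ξ, η ∈ ℝ: Im p(ξ + iα, η + iaα) = (α/4)(3ξ² − α² + 3(η − aξ)²/(ξ² + α²) + 4c), and consequently Im p(ξ + iα, η + iaα) ≥ α(c − α²/4). -/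
/-- the symbol p(ζ,μ) = (1/4)(ζ³ − 3μ²/ζ + 4b₁ζ + 4b₂μ) of the linearized
KP-II operator in a moving frame -/
noncomputable def psym (b₁ b₂ : ℝ) (ζ μ : ℂ) : ℂ :=
  (1/4 : ℂ) * (ζ^3 - 3*μ^2/ζ + 4*(b₁ : ℂ)*ζ + 4*(b₂ : ℂ)*μ)

/-- imaginary part of the symbol on exponentially weighted
Fourier modes, and its lower bound. -/
theorem symbol_imaginary_part_bound
    (a b₁ b₂ α c : ℝ) (hα : 0 < α)
    (hc : c = b₁ + a*b₂ - (3/4)*a^2) :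
    ∀ ξ η : ℝ,
      (psym b₁ b₂ ((ξ : ℂ) + (α : ℂ)*Complex.I)
          ((η : ℂ) + (a*α : ℝ)*Complex.I)).im
        = (α/4)*(3*ξ^2 - α^2 + 3*(η - a*ξ)^2/(ξ^2 + α^2) + 4*c)
      ∧ α*(c - α^2/4)
        ≤ (psym b₁ b₂ ((ξ : ℂ) + (α : ℂ)*Complex.I)
            ((η : ℂ) + (a*α : ℝ)*Complex.I)).im := by
  intro ξ η
  have hD : 0 < ξ^2 + α^2 := by positivity
  have h : (psym b₁ b₂ ((ξ : ℂ) + (α : ℂ)*Complex.I)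
          ((η : ℂ) + (a*α : ℝ)*Complex.I)).im
        = (α/4)*(3*ξ^2 - α^2 + 3*(η - a*ξ)^2/(ξ^2 + α^2) + 4*c) := by
    have hN : Complex.normSq ((ξ : ℂ) + (α : ℂ)*Complex.I) = ξ^2 + α^2 :=
      Complex.normSq_add_mul_I ξ α
    have h4 : (1/4 : ℂ) = ((1/4 : ℝ) : ℂ) := by push_cast; rfl
    rw [psym, h4, Complex.im_ofReal_mul]
    simp [Complex.div_im, hN, pow_succ]
    field_simp
    rw [hc]
    ring
  refine ⟨h, ?_⟩
  have hq : 0 ≤ 3*ξ^2 + 3*(η - a*ξ)^2/(ξ^2 + α^2) := by positivity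
  rw [h]
  linarith [mul_nonneg hα.le hq]
end

section
/- P-type setup: let κ₁ < κ₂ < κ₃ < κ₄ with κ₂+κ₃ ≠ κ₁+κ₄; a₂₃ = (κ₂+κ₃)/2, a₁₄ = (κ₁+κ₄)/2, c₁₄ = (κ₄−κ₁)²/4. Define θⱼ(x,y) := κⱼx + κⱼ²y, τ₁ := e^{θ₂} + e^{θ₃}, τ₂ := (κ₂−κ₁)e^{θ₁+θ₂} + (κ₃−κ₁)e^{θ₁+θ₃} + (κ₄−κ₂)e^{θ₂+θ₄} + (κ₄−κ₃)e^{θ₃+θ₄}, v₂ := ∂_x log(τ₂/τ₁), and z₂ := x + 2a₁₄y. Let 0 < α < √c₁₄. Suppose φ̃ : ℝ² → ℝ is smooth, every partial derivative ∂_x^i∂_y^j φ̃ (i, j ≥ 0, including φ̃ itself) satisfies ∫∫ |∂_x^i∂_y^j φ̃(x,y)|² e^{2αz₂} dxdy < ∞, and ∂_yφ̃ + ∂_x²φ̃ = 2v₂∂_xφ̃ on ℝ². Then φ̃ ≡ 0. -/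
open MeasureTheory

noncomputable def pXr (f : ℝ → ℝ → ℝ) : ℝ → ℝ → ℝ :=
  fun x y => deriv (fun s => f s y) x

noncomputable def pYr (f : ℝ → ℝ → ℝ) : ℝ → ℝ → ℝ :=
  fun x y => deriv (fun s => f x s) y

/-- τ-function of the (t = 0) P-type 2-line soliton -/
noncomputable def Ptau (κ₁ κ₂ κ₃ κ₄ : ℝ) (x y : ℝ) : ℝ :=
  (κ₂ - κ₁) * Real.exp ((κ₁ + κ₂)*x + (κ₁^2 + κ₂^2)*y)
  + (κ₃ - κ₁) * Real.exp ((κ₁ + κ₃)*x + (κ₁^2 + κ₃^2)*y)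
  + (κ₄ - κ₂) * Real.exp ((κ₂ + κ₄)*x + (κ₂^2 + κ₄^2)*y)
  + (κ₄ - κ₃) * Real.exp ((κ₃ + κ₄)*x + (κ₃^2 + κ₄^2)*y)

/-- τ-function of the [2,3]-soliton factor -/
noncomputable def Ptau1 (κ₂ κ₃ : ℝ) (x y : ℝ) : ℝ :=
  Real.exp (κ₂*x + κ₂^2*y) + Real.exp (κ₃*x + κ₃^2*y)

section PartialDerivatives

variable {f : ℝ → ℝ → ℝ}

lemma hasDerivAt_pXr (hf : ContDiff ℝ (⊤ : ℕ∞) fun p : ℝ × ℝ => f p.1 p.2) (x y : ℝ) :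
    HasDerivAt (fun s => f s y) (pXr f x y) x := by
  have h : ContDiff ℝ (⊤ : ℕ∞) fun s : ℝ => f s y :=
    hf.comp (contDiff_id.prodMk contDiff_const : ContDiff ℝ (⊤ : ℕ∞) fun s : ℝ => (s, y))
  exact (h.differentiable (by simp) x).hasDerivAt

lemma hasDerivAt_pYr (hf : ContDiff ℝ (⊤ : ℕ∞) fun p : ℝ × ℝ => f p.1 p.2) (x y : ℝ) :
    HasDerivAt (fun s => f x s) (pYr f x y) y := by
  have h : ContDiff ℝ (⊤ : ℕ∞) fun s : ℝ => f x s :=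
    hf.comp (contDiff_const.prodMk contDiff_id : ContDiff ℝ (⊤ : ℕ∞) fun s : ℝ => (x, s))
  exact (h.differentiable (by simp) y).hasDerivAt

lemma contDiff_pXr (hf : ContDiff ℝ (⊤ : ℕ∞) fun p : ℝ × ℝ => f p.1 p.2) :
    ContDiff ℝ (⊤ : ℕ∞) fun p : ℝ × ℝ => pXr f p.1 p.2 := by
  have h : (fun p : ℝ × ℝ => pXr f p.1 p.2)
      = fun p => fderiv ℝ (fun p : ℝ × ℝ => f p.1 p.2) p (1, 0) := by
    funext p
    have hd := (hf.differentiable (by simp) p).hasFDerivAt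
    have hc : HasDerivAt (fun s : ℝ => (s, p.2)) ((1 : ℝ), (0 : ℝ)) p.1 :=
      (hasDerivAt_id p.1).prodMk (hasDerivAt_const p.1 p.2)
    exact (hd.comp_hasDerivAt p.1 hc).deriv
  rw [h]
  exact (hf.fderiv_right (by simp)).clm_apply contDiff_const

lemma contDiff_pYr (hf : ContDiff ℝ (⊤ : ℕ∞) fun p : ℝ × ℝ => f p.1 p.2) :
    ContDiff ℝ (⊤ : ℕ∞) fun p : ℝ × ℝ => pYr f p.1 p.2 := by
  have h : (fun p : ℝ × ℝ => pYr f p.1 p.2)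
      = fun p => fderiv ℝ (fun p : ℝ × ℝ => f p.1 p.2) p (0, 1) := by
    funext p
    have hd := (hf.differentiable (by simp) p).hasFDerivAt
    have hc : HasDerivAt (fun s : ℝ => (p.1, s)) ((0 : ℝ), (1 : ℝ)) p.2 :=
      (hasDerivAt_const p.2 p.1).prodMk (hasDerivAt_id p.2)
    exact (hd.comp_hasDerivAt p.2 hc).deriv
  rw [h]
  exact (hf.fderiv_right (by simp)).clm_apply contDiff_const

end PartialDerivatives

section PlaneIntegrals

variable {F F' : ℝ → ℝ → ℝ}

lemma integral_plane_eq_zero_of_hasDerivAt_snd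
    (hd : ∀ x y, HasDerivAt (fun s => F x s) (F' x y) y)
    (hF : Integrable fun p : ℝ × ℝ => F p.1 p.2)
    (hF' : Integrable fun p : ℝ × ℝ => F' p.1 p.2) :
    ∫ p : ℝ × ℝ, F' p.1 p.2 = 0 := by
  rw [Measure.volume_eq_prod] at hF hF' ⊢
  rw [integral_prod _ hF']
  refine integral_eq_zero_of_ae ?_
  filter_upwards [hF.prod_right_ae, hF'.prod_right_ae] with x h h'
  exact integral_eq_zero_of_hasDerivAt_of_integrable (hd x) h' h

lemma integral_plane_eq_zero_of_hasDerivAt_fst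
    (hd : ∀ x y, HasDerivAt (fun s => F s y) (F' x y) x)
    (hF : Integrable fun p : ℝ × ℝ => F p.1 p.2)
    (hF' : Integrable fun p : ℝ × ℝ => F' p.1 p.2) :
    ∫ p : ℝ × ℝ, F' p.1 p.2 = 0 := by
  have h := integral_plane_eq_zero_of_hasDerivAt_snd (F := fun x y => F y x)
    (F' := fun x y => F' y x) (fun x y => hd y x) hF.swap hF'.swap
  rw [← h, Measure.volume_eq_prod]
  exact (integral_prod_swap fun p : ℝ × ℝ => F' p.1 p.2).symm

lemma eq_zero_of_integral_plane_eq_zero {g : ℝ × ℝ → ℝ} (hc : Continuous g)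
    (h0 : ∀ p, 0 ≤ g p) (hi : Integrable g) (h : ∫ p, g p = 0) (p : ℝ × ℝ) : g p = 0 := by
  have hae := (integral_eq_zero_iff_of_nonneg h0 hi).1 h
  exact congrFun ((hc.ae_eq_iff_eq volume continuous_zero).1 hae) p

/-- Cauchy–Schwarz in the weighted space `L²(W)`, against a coefficient dominated by `W`. -/
lemma integrable_mul_mul_of_sq_weighted {f g r W : ℝ × ℝ → ℝ} {C : ℝ}
    (hf : Continuous f) (hg : Continuous g) (hr : Continuous r)
    (hfW : Integrable fun p => f p ^ 2 * W p) (hgW : Integrable fun p => g p ^ 2 * W p)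
    (hrW : ∀ p, |r p| ≤ C * W p) :
    Integrable fun p => f p * g p * r p := by
  refine ((hfW.add hgW).const_mul (C / 2)).mono'
    ((hf.mul hg).mul hr).aestronglyMeasurable (Filter.Eventually.of_forall fun p => ?_)
  have h1 : |f p * g p| ≤ (f p ^ 2 + g p ^ 2) / 2 := by
    rw [abs_le]
    constructor <;> nlinarith [sq_nonneg (f p + g p), sq_nonneg (f p - g p)]
  calc ‖f p * g p * r p‖ = |f p * g p| * |r p| := by rw [Real.norm_eq_abs, abs_mul]
    _ ≤ (f p ^ 2 + g p ^ 2) / 2 * (C * W p) :=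
      mul_le_mul h1 (hrW p) (abs_nonneg _) (by positivity)
    _ = C / 2 * (f p ^ 2 * W p + g p ^ 2 * W p) := by ring

end PlaneIntegrals

/-- `ρ` is a positive solution of `ρ_y = (ρ_x + 2vρ)_x`, with flux `q = ρ_x + 2vρ`, which together
with `q` and `ρ_y` is dominated by the weight `C * W`. -/
structure IsDominatedAdjointSolution (v W ρ ρx ρy q : ℝ → ℝ → ℝ) (C : ℝ) : Prop where
  continuous : Continuous fun p : ℝ × ℝ => ρ p.1 p.2
  continuous_snd : Continuous fun p : ℝ × ℝ => ρy p.1 p.2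
  continuous_flux : Continuous fun p : ℝ × ℝ => q p.1 p.2
  hasDerivAt_fst : ∀ x y, HasDerivAt (fun s => ρ s y) (ρx x y) x
  hasDerivAt_snd : ∀ x y, HasDerivAt (fun s => ρ x s) (ρy x y) y
  flux_eq : ∀ x y, q x y = ρx x y + 2 * v x y * ρ x y
  hasDerivAt_flux : ∀ x y, HasDerivAt (fun s => q s y) (ρy x y) x
  pos : ∀ x y, 0 < ρ x y
  bound : ∀ x y, |ρ x y| ≤ C * W x y
  bound_flux : ∀ x y, |q x y| ≤ C * W x y
  bound_snd : ∀ x y, |ρy x y| ≤ C * W x y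

/-- A positive solution of the adjoint equation that is dominated by the weight `W` forces
`L²(W)`-solutions of `f_y + f_xx = 2 v f_x` to be independent of `x`. -/
lemma IsDominatedAdjointSolution.deriv_fst_eq_zero
    {f fx fxx fy v ρ ρx ρy q W : ℝ → ℝ → ℝ} {C : ℝ}
    (h : IsDominatedAdjointSolution v W ρ ρx ρy q C)
    (hf : Continuous fun p : ℝ × ℝ => f p.1 p.2)
    (hfxc : Continuous fun p : ℝ × ℝ => fx p.1 p.2)
    (hfyc : Continuous fun p : ℝ × ℝ => fy p.1 p.2)
    (hfx : ∀ x y, HasDerivAt (fun s => f s y) (fx x y) x)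
    (hfxx : ∀ x y, HasDerivAt (fun s => fx s y) (fxx x y) x)
    (hfy : ∀ x y, HasDerivAt (fun s => f x s) (fy x y) y)
    (hfI : Integrable fun p : ℝ × ℝ => f p.1 p.2 ^ 2 * W p.1 p.2)
    (hfxI : Integrable fun p : ℝ × ℝ => fx p.1 p.2 ^ 2 * W p.1 p.2)
    (hfyI : Integrable fun p : ℝ × ℝ => fy p.1 p.2 ^ 2 * W p.1 p.2)
    (hPDE : ∀ x y, fy x y + fxx x y = 2 * v x y * fx x y) (x y : ℝ) :
    fx x y = 0 := by
  obtain ⟨hρ, hρyc, hqc, hρx, hρy, hq, hqx, hρ0, hρW, hqW, hρyW⟩ := h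
  have Iff := integrable_mul_mul_of_sq_weighted hf hf hρ hfI hfI fun p => hρW p.1 p.2
  have Iffx := integrable_mul_mul_of_sq_weighted hf hfxc hρ hfI hfxI fun p => hρW p.1 p.2
  have Ixx := integrable_mul_mul_of_sq_weighted hfxc hfxc hρ hfxI hfxI fun p => hρW p.1 p.2
  have Iffy := integrable_mul_mul_of_sq_weighted hf hfyc hρ hfI hfyI fun p => hρW p.1 p.2
  have Ify := integrable_mul_mul_of_sq_weighted hf hf hρyc hfI hfI fun p => hρyW p.1 p.2
  have Ifq := integrable_mul_mul_of_sq_weighted hf hf hqc hfI hfI fun p => hqW p.1 p.2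
  have IFy := (Iffy.const_mul 2).add Ify
  have hFy : ∫ p : ℝ × ℝ, (2 * (f p.1 p.2 * fy p.1 p.2 * ρ p.1 p.2)
      + f p.1 p.2 * f p.1 p.2 * ρy p.1 p.2) = 0 := by
    refine integral_plane_eq_zero_of_hasDerivAt_snd (F := fun x y => f x y * f x y * ρ x y)
      (F' := fun x y => 2 * (f x y * fy x y * ρ x y) + f x y * f x y * ρy x y)
      (fun x y => ?_) Iff IFy
    refine HasDerivAt.congr_deriv (((hfy x y).mul (hfy x y)).mul (hρy x y)) ?_
    simp only [Pi.mul_apply]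
    ring
  have hGx : ∫ p : ℝ × ℝ, ((2 * (f p.1 p.2 * fy p.1 p.2 * ρ p.1 p.2)
      + f p.1 p.2 * f p.1 p.2 * ρy p.1 p.2) - 2 * (fx p.1 p.2 * fx p.1 p.2 * ρ p.1 p.2)) = 0 := by
    refine integral_plane_eq_zero_of_hasDerivAt_fst
      (F := fun x y => -2 * (f x y * fx x y * ρ x y) + f x y * f x y * q x y)
      (F' := fun x y => (2 * (f x y * fy x y * ρ x y) + f x y * f x y * ρy x y)
        - 2 * (fx x y * fx x y * ρ x y))
      (fun x y => ?_) ((Iffx.const_mul (-2)).add Ifq) (IFy.sub (Ixx.const_mul 2))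
    refine HasDerivAt.congr_deriv (((((hfx x y).mul (hfxx x y)).mul (hρx x y)).const_mul (-2)).add
      (((hfx x y).mul (hfx x y)).mul (hqx x y))) ?_
    simp only [Pi.mul_apply]
    rw [hq x y, eq_sub_of_add_eq (hPDE x y)]
    ring
  have hzero : ∫ p : ℝ × ℝ, fx p.1 p.2 * fx p.1 p.2 * ρ p.1 p.2 = 0 := by
    have h := integral_sub IFy (Ixx.const_mul 2)
    simp only [Pi.add_apply] at h
    rw [hGx, hFy, integral_const_mul] at h
    linarith
  have h := eq_zero_of_integral_plane_eq_zero ((hfxc.mul hfxc).mul hρ)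
    (fun p => mul_nonneg (mul_self_nonneg _) (hρ0 _ _).le) Ixx hzero (x, y)
  simpa [(hρ0 x y).ne'] using h

/-- The exponential `e^{θ}` with `θ = κ x + κ² y`. -/
noncomputable def expPhase (κ x y : ℝ) : ℝ := Real.exp (κ * x + κ ^ 2 * y)

lemma expPhase_pos (κ x y : ℝ) : 0 < expPhase κ x y := Real.exp_pos _

lemma hasDerivAt_expPhase_fst (κ x y : ℝ) :
    HasDerivAt (fun s => expPhase κ s y) (κ * expPhase κ x y) x := by
  have h := (((hasDerivAt_id x).const_mul κ).add_const (κ ^ 2 * y)).exp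
  simpa [expPhase, mul_comm] using h

lemma hasDerivAt_expPhase_snd (κ x y : ℝ) :
    HasDerivAt (fun s => expPhase κ x s) (κ ^ 2 * expPhase κ x y) y := by
  have h := (((hasDerivAt_id y).const_mul (κ ^ 2)).const_add (κ * x)).exp
  simpa [expPhase, mul_comm] using h

lemma continuous_expPhase (κ : ℝ) : Continuous fun p : ℝ × ℝ => expPhase κ p.1 p.2 := by
  unfold expPhase
  fun_prop

lemma Ptau_eq (κ₁ κ₂ κ₃ κ₄ x y : ℝ) :
    Ptau κ₁ κ₂ κ₃ κ₄ x y
      = (κ₂ - κ₁) * (expPhase κ₁ x y * expPhase κ₂ x y)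
      + (κ₃ - κ₁) * (expPhase κ₁ x y * expPhase κ₃ x y)
      + (κ₄ - κ₂) * (expPhase κ₂ x y * expPhase κ₄ x y)
      + (κ₄ - κ₃) * (expPhase κ₃ x y * expPhase κ₄ x y) := by
  simp only [Ptau, expPhase, ← Real.exp_add]
  ring_nf

lemma Ptau1_eq (κ₂ κ₃ x y : ℝ) :
    Ptau1 κ₂ κ₃ x y = expPhase κ₂ x y + expPhase κ₃ x y := rfl

lemma abs_add_mul_le_mul_add {a b k l N : ℝ} (ha : 0 ≤ a) (hb : 0 ≤ b) (hk : |k| ≤ N)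
    (hl : |l| ≤ N) : |k * a + l * b| ≤ N * (a + b) := by
  rw [abs_le] at *
  constructor <;>
    nlinarith [mul_nonneg ha (sub_nonneg.2 hk.2), mul_nonneg hb (sub_nonneg.2 hl.2),
      mul_nonneg ha (neg_le_iff_add_nonneg.1 hk.1), mul_nonneg hb (neg_le_iff_add_nonneg.1 hl.1)]

/-- The weight `e^{2αz}` dominates the line soliton profile `sech²` when `2α ≤ κ₄ - κ₁`. -/
lemma expPhase_mul_le_weight {κ₁ κ₄ α : ℝ} (hα0 : 0 ≤ α) (hα : 2 * α ≤ κ₄ - κ₁) (x y : ℝ) :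
    expPhase κ₁ x y * expPhase κ₄ x y
      ≤ Real.exp (2 * α * (x + (κ₁ + κ₄) * y)) * (expPhase κ₁ x y + expPhase κ₄ x y) ^ 2 := by
  have h1 := expPhase_pos κ₁ x y
  have h4 := expPhase_pos κ₄ x y
  rcases le_total 0 (x + (κ₁ + κ₄) * y) with hz | hz
  · have hW : 1 ≤ Real.exp (2 * α * (x + (κ₁ + κ₄) * y)) := Real.one_le_exp (by positivity)
    calc expPhase κ₁ x y * expPhase κ₄ x y
        ≤ 1 * (expPhase κ₁ x y + expPhase κ₄ x y) ^ 2 := by nlinarith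
      _ ≤ _ := by gcongr
  · have hW : Real.exp ((κ₄ - κ₁) * (x + (κ₁ + κ₄) * y))
        ≤ Real.exp (2 * α * (x + (κ₁ + κ₄) * y)) :=
      Real.exp_le_exp.2 (mul_le_mul_of_nonpos_right hα hz)
    have he : expPhase κ₁ x y * expPhase κ₄ x y
        = Real.exp ((κ₄ - κ₁) * (x + (κ₁ + κ₄) * y)) * expPhase κ₁ x y ^ 2 := by
      simp only [expPhase, ← Real.exp_add, ← Real.exp_nat_mul]
      congr 1
      push_cast
      ring
    rw [he]
    gcongr
    exact le_add_of_nonneg_right h4.le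

/-- If `τ₁`, `τ₂` and a third positive function `P` satisfy a bilinear relation, then `τ₁ P / τ₂²` is
a positive solution of the adjoint equation with drift `v = ∂_x log (τ₂ / τ₁)`. -/
lemma exists_adjointSolution_of_bilinear
    {T Tx Ty S Sx Sy P Px Pxx Py v W : ℝ → ℝ → ℝ} {N K : ℝ} (N0 : 0 < N)
    (T0 : ∀ x y, 0 < T x y) (S0 : ∀ x y, 0 < S x y) (P0 : ∀ x y, 0 < P x y)
    (cT : Continuous fun p : ℝ × ℝ => T p.1 p.2) (cTx : Continuous fun p : ℝ × ℝ => Tx p.1 p.2)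
    (cTy : Continuous fun p : ℝ × ℝ => Ty p.1 p.2) (cS : Continuous fun p : ℝ × ℝ => S p.1 p.2)
    (cSy : Continuous fun p : ℝ × ℝ => Sy p.1 p.2) (cP : Continuous fun p : ℝ × ℝ => P p.1 p.2)
    (cPx : Continuous fun p : ℝ × ℝ => Px p.1 p.2) (cPy : Continuous fun p : ℝ × ℝ => Py p.1 p.2)
    (hTx : ∀ x y, HasDerivAt (fun s => T s y) (Tx x y) x)
    (hTxx : ∀ x y, HasDerivAt (fun s => Tx s y) (Ty x y) x)
    (hTy : ∀ x y, HasDerivAt (fun s => T x s) (Ty x y) y)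
    (hSx : ∀ x y, HasDerivAt (fun s => S s y) (Sx x y) x)
    (hSy : ∀ x y, HasDerivAt (fun s => S x s) (Sy x y) y)
    (hPx : ∀ x y, HasDerivAt (fun s => P s y) (Px x y) x)
    (hPxx : ∀ x y, HasDerivAt (fun s => Px s y) (Pxx x y) x)
    (hPy : ∀ x y, HasDerivAt (fun s => P x s) (Py x y) y)
    (bilin : ∀ x y, S x y * (T x y * Pxx x y - Ty x y * P x y)
        - 2 * (T x y * Px x y - Tx x y * P x y) * Sx x y
      = S x y * (Ty x y * P x y + T x y * Py x y) - 2 * (T x y * P x y) * Sy x y)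
    (hv : ∀ x y, v x y = Sx x y / S x y - Tx x y / T x y)
    (bT : ∀ x y, |Tx x y| ≤ N * T x y) (bTy : ∀ x y, |Ty x y| ≤ N * T x y)
    (bP : ∀ x y, |Px x y| ≤ N * P x y) (bPy : ∀ x y, |Py x y| ≤ N * P x y)
    (bSy : ∀ x y, |Sy x y| ≤ N * S x y)
    (bρ : ∀ x y, T x y * P x y / S x y ^ 2 ≤ K * W x y) :
    ∃ (ρ ρx ρy q : ℝ → ℝ → ℝ) (C : ℝ), IsDominatedAdjointSolution v W ρ ρx ρy q C := by
  let ρ : ℝ → ℝ → ℝ := fun x y => T x y * P x y / S x y ^ 2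
  let ρx : ℝ → ℝ → ℝ := fun x y =>
    (Tx x y * P x y + T x y * Px x y) / S x y ^ 2 - 2 * (T x y * P x y) * Sx x y / S x y ^ 3
  let ρy : ℝ → ℝ → ℝ := fun x y =>
    (Ty x y * P x y + T x y * Py x y) / S x y ^ 2 - 2 * (T x y * P x y) * Sy x y / S x y ^ 3
  let q : ℝ → ℝ → ℝ := fun x y => (T x y * Px x y - Tx x y * P x y) / S x y ^ 2
  have ρ0 : ∀ x y, 0 < ρ x y := fun x y => div_pos (mul_pos (T0 x y) (P0 x y)) (pow_pos (S0 x y) 2)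
  have bq : ∀ x y, |q x y| ≤ 2 * N * ρ x y := fun x y => by
    have hT := T0 x y; have hP := P0 x y; have hS := S0 x y
    have h1 : |T x y * Px x y| ≤ T x y * (N * P x y) := by
      rw [abs_mul, abs_of_pos hT]; gcongr; exact bP x y
    have h2 : |Tx x y * P x y| ≤ N * T x y * P x y := by
      rw [abs_mul, abs_of_pos hP]; gcongr; exact bT x y
    simp only [q, ρ]
    rw [abs_div, abs_of_pos (pow_pos hS 2), ← mul_div_assoc]
    gcongr
    exact (abs_sub _ _).trans ((add_le_add h1 h2).trans_eq (by ring))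
  have bρy : ∀ x y, |ρy x y| ≤ 4 * N * ρ x y := fun x y => by
    have hT := T0 x y; have hP := P0 x y; have hS := S0 x y
    have h1 : |T x y * Py x y| ≤ T x y * (N * P x y) := by
      rw [abs_mul, abs_of_pos hT]; gcongr; exact bPy x y
    have h2 : |Ty x y * P x y| ≤ N * T x y * P x y := by
      rw [abs_mul, abs_of_pos hP]; gcongr; exact bTy x y
    have h3 : |2 * (T x y * P x y) * Sy x y / S x y ^ 3| ≤ 2 * N * ρ x y := by
      rw [abs_div, abs_of_pos (pow_pos hS 3), abs_mul, abs_of_pos (by positivity)]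
      calc _ ≤ 2 * (T x y * P x y) * (N * S x y) / S x y ^ 3 := by gcongr; exact bSy x y
        _ = _ := by simp only [ρ]; field_simp
    have h4 : |(Ty x y * P x y + T x y * Py x y) / S x y ^ 2| ≤ 2 * N * ρ x y := by
      rw [abs_div, abs_of_pos (pow_pos hS 2)]
      simp only [ρ]
      rw [← mul_div_assoc]
      gcongr
      exact (abs_add_le _ _).trans ((add_le_add h2 h1).trans_eq (by ring))
    exact (abs_sub _ _).trans ((add_le_add h4 h3).trans_eq (by ring))
  have bound : ∀ {r k : ℝ} (x y), |r| ≤ k * ρ x y → k ≤ 1 + 4 * N →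
      |r| ≤ (1 + 4 * N) * K * W x y :=
    fun {r k} x y hr hk => by
      rw [mul_assoc]
      exact hr.trans (mul_le_mul hk (bρ x y) (ρ0 x y).le (by positivity))
  refine ⟨ρ, ρx, ρy, q, (1 + 4 * N) * K, ?_, ?_, ?_, fun x y => ?_,
    fun x y => ?_, fun x y => ?_, fun x y => ?_, ρ0,
    fun x y => bound x y (k := 1) (by rw [abs_of_pos (ρ0 x y), one_mul]) (by linarith),
    fun x y => bound x y (bq x y) (by linarith), fun x y => bound x y (bρy x y) (by linarith)⟩
  · exact Continuous.div (by fun_prop) (by fun_prop) fun p => (pow_pos (S0 _ _) 2).ne'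
  · exact (Continuous.div (by fun_prop) (by fun_prop) fun p => (pow_pos (S0 _ _) 2).ne').sub
      (Continuous.div (by fun_prop) (by fun_prop) fun p => (pow_pos (S0 _ _) 3).ne')
  · exact Continuous.div (by fun_prop) (by fun_prop) fun p => (pow_pos (S0 _ _) 2).ne'
  · have hS := (S0 x y).ne'
    refine HasDerivAt.congr_deriv
      (((hTx x y).mul (hPx x y)).div ((hSx x y).pow 2) (pow_ne_zero 2 hS)) ?_
    simp only [ρx, Pi.mul_apply]
    field_simp
    push_cast
    ring
  · have hS := (S0 x y).ne'
    refine HasDerivAt.congr_deriv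
      (((hTy x y).mul (hPy x y)).div ((hSy x y).pow 2) (pow_ne_zero 2 hS)) ?_
    simp only [ρy, Pi.mul_apply]
    field_simp
    push_cast
    ring
  · have hS := (S0 x y).ne'
    have hT := (T0 x y).ne'
    rw [hv]
    simp only [q, ρx, ρ]
    field_simp
    ring
  · have hS := (S0 x y).ne'
    refine HasDerivAt.congr_deriv ((((hTx x y).mul (hPxx x y)).sub ((hTxx x y).mul (hPx x y))).div
      ((hSx x y).pow 2) (pow_ne_zero 2 hS)) ?_
    simp only [ρy, Pi.mul_apply, Pi.sub_apply]
    have h := bilin x y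
    field_simp
    push_cast
    linear_combination S x y * h

set_option maxHeartbeats 1000000 in
/-- The drift of the P-type soliton admits a dominated adjoint solution, namely
`τ₁ Wr(τ₁, e^{θ₄}, e^{θ₁}) / τ₂²` up to a constant. -/
lemma exists_adjointSolution_Ptau {κ₁ κ₂ κ₃ κ₄ α : ℝ}
    (h12 : κ₁ < κ₂) (h23 : κ₂ < κ₃) (h34 : κ₃ < κ₄)
    (hα0 : 0 ≤ α) (hα : 2 * α ≤ κ₄ - κ₁) :
    ∃ (ρ ρx ρy q : ℝ → ℝ → ℝ) (C : ℝ), IsDominatedAdjointSolution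
      (pXr fun a b => Real.log (Ptau κ₁ κ₂ κ₃ κ₄ a b / Ptau1 κ₂ κ₃ a b))
      (fun x y => Real.exp (2 * α * (x + (κ₁ + κ₄) * y))) ρ ρx ρy q C := by
  set e₁ := expPhase κ₁ with he₁
  set e₂ := expPhase κ₂ with he₂
  set e₃ := expPhase κ₃ with he₃
  set e₄ := expPhase κ₄ with he₄
  have p₁ : ∀ x y, 0 < e₁ x y := expPhase_pos κ₁
  have p₂ : ∀ x y, 0 < e₂ x y := expPhase_pos κ₂
  have p₃ : ∀ x y, 0 < e₃ x y := expPhase_pos κ₃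
  have p₄ : ∀ x y, 0 < e₄ x y := expPhase_pos κ₄
  have c₁ : Continuous fun p : ℝ × ℝ => e₁ p.1 p.2 := continuous_expPhase κ₁
  have c₂ : Continuous fun p : ℝ × ℝ => e₂ p.1 p.2 := continuous_expPhase κ₂
  have c₃ : Continuous fun p : ℝ × ℝ => e₃ p.1 p.2 := continuous_expPhase κ₃
  have c₄ : Continuous fun p : ℝ × ℝ => e₄ p.1 p.2 := continuous_expPhase κ₄
  have x₁ : ∀ x y, HasDerivAt (fun s => e₁ s y) (κ₁ * e₁ x y) x := hasDerivAt_expPhase_fst κ₁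
  have x₂ : ∀ x y, HasDerivAt (fun s => e₂ s y) (κ₂ * e₂ x y) x := hasDerivAt_expPhase_fst κ₂
  have x₃ : ∀ x y, HasDerivAt (fun s => e₃ s y) (κ₃ * e₃ x y) x := hasDerivAt_expPhase_fst κ₃
  have x₄ : ∀ x y, HasDerivAt (fun s => e₄ s y) (κ₄ * e₄ x y) x := hasDerivAt_expPhase_fst κ₄
  have y₁ : ∀ x y, HasDerivAt (fun s => e₁ x s) (κ₁ ^ 2 * e₁ x y) y := hasDerivAt_expPhase_snd κ₁
  have y₂ : ∀ x y, HasDerivAt (fun s => e₂ x s) (κ₂ ^ 2 * e₂ x y) y := hasDerivAt_expPhase_snd κ₂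
  have y₃ : ∀ x y, HasDerivAt (fun s => e₃ x s) (κ₃ ^ 2 * e₃ x y) y := hasDerivAt_expPhase_snd κ₃
  have y₄ : ∀ x y, HasDerivAt (fun s => e₄ x s) (κ₄ ^ 2 * e₄ x y) y := hasDerivAt_expPhase_snd κ₄
  have d21 : 0 < κ₂ - κ₁ := by linarith
  have d31 : 0 < κ₃ - κ₁ := by linarith
  have d42 : 0 < κ₄ - κ₂ := by linarith
  have d43 : 0 < κ₄ - κ₃ := by linarith
  have d41 : 0 < κ₄ - κ₁ := by linarith
  let T : ℝ → ℝ → ℝ := fun x y => e₂ x y + e₃ x y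
  let Tx : ℝ → ℝ → ℝ := fun x y => κ₂ * e₂ x y + κ₃ * e₃ x y
  let Ty : ℝ → ℝ → ℝ := fun x y => κ₂ ^ 2 * e₂ x y + κ₃ ^ 2 * e₃ x y
  let S : ℝ → ℝ → ℝ := fun x y => (κ₂ - κ₁) * (e₁ x y * e₂ x y) + (κ₃ - κ₁) * (e₁ x y * e₃ x y)
    + (κ₄ - κ₂) * (e₂ x y * e₄ x y) + (κ₄ - κ₃) * (e₃ x y * e₄ x y)
  let Sx : ℝ → ℝ → ℝ := fun x y => (κ₁ + κ₂) * ((κ₂ - κ₁) * (e₁ x y * e₂ x y))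
    + (κ₁ + κ₃) * ((κ₃ - κ₁) * (e₁ x y * e₃ x y))
    + ((κ₂ + κ₄) * ((κ₄ - κ₂) * (e₂ x y * e₄ x y)) + (κ₃ + κ₄) * ((κ₄ - κ₃) * (e₃ x y * e₄ x y)))
  let Sy : ℝ → ℝ → ℝ := fun x y => (κ₁ ^ 2 + κ₂ ^ 2) * ((κ₂ - κ₁) * (e₁ x y * e₂ x y))
    + (κ₁ ^ 2 + κ₃ ^ 2) * ((κ₃ - κ₁) * (e₁ x y * e₃ x y))
    + ((κ₂ ^ 2 + κ₄ ^ 2) * ((κ₄ - κ₂) * (e₂ x y * e₄ x y))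
      + (κ₃ ^ 2 + κ₄ ^ 2) * ((κ₄ - κ₃) * (e₃ x y * e₄ x y)))
  let A : ℝ → ℝ → ℝ := fun x y => (κ₂ - κ₁) * (κ₄ - κ₂) * (e₁ x y * e₄ x y * e₂ x y)
  let B : ℝ → ℝ → ℝ := fun x y => (κ₃ - κ₁) * (κ₄ - κ₃) * (e₁ x y * e₄ x y * e₃ x y)
  let P : ℝ → ℝ → ℝ := fun x y => A x y + B x y
  let Px : ℝ → ℝ → ℝ := fun x y => (κ₁ + κ₄ + κ₂) * A x y + (κ₁ + κ₄ + κ₃) * B x y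
  let Pxx : ℝ → ℝ → ℝ := fun x y => (κ₁ + κ₄ + κ₂) ^ 2 * A x y + (κ₁ + κ₄ + κ₃) ^ 2 * B x y
  let Py : ℝ → ℝ → ℝ := fun x y =>
    (κ₁ ^ 2 + κ₄ ^ 2 + κ₂ ^ 2) * A x y + (κ₁ ^ 2 + κ₄ ^ 2 + κ₃ ^ 2) * B x y
  have T0 : ∀ x y, 0 < T x y := fun x y => add_pos (p₂ x y) (p₃ x y)
  have S0 : ∀ x y, 0 < S x y := fun x y => by
    have := p₁ x y; have := p₂ x y; have := p₃ x y; have := p₄ x y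
    positivity
  have A0 : ∀ x y, 0 < A x y := fun x y => by
    have := p₁ x y; have := p₂ x y; have := p₄ x y
    positivity
  have B0 : ∀ x y, 0 < B x y := fun x y => by
    have := p₁ x y; have := p₃ x y; have := p₄ x y
    positivity
  have P0 : ∀ x y, 0 < P x y := fun x y => add_pos (A0 x y) (B0 x y)
  have hTx : ∀ x y, HasDerivAt (fun s => T s y) (Tx x y) x := fun x y => (x₂ x y).add (x₃ x y)
  have hTxx : ∀ x y, HasDerivAt (fun s => Tx s y) (Ty x y) x := fun x y => by
    refine HasDerivAt.congr_deriv (((x₂ x y).const_mul κ₂).add ((x₃ x y).const_mul κ₃)) ?_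
    simp only [Ty]; ring
  have hTy : ∀ x y, HasDerivAt (fun s => T x s) (Ty x y) y := fun x y => (y₂ x y).add (y₃ x y)
  have hSx : ∀ x y, HasDerivAt (fun s => S s y) (Sx x y) x := fun x y => by
    refine HasDerivAt.congr_deriv ((((((x₁ x y).mul (x₂ x y)).const_mul (κ₂ - κ₁)).add
      (((x₁ x y).mul (x₃ x y)).const_mul (κ₃ - κ₁))).add
      (((x₂ x y).mul (x₄ x y)).const_mul (κ₄ - κ₂))).add
      (((x₃ x y).mul (x₄ x y)).const_mul (κ₄ - κ₃))) ?_
    simp only [Sx]; ring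
  have hSy : ∀ x y, HasDerivAt (fun s => S x s) (Sy x y) y := fun x y => by
    refine HasDerivAt.congr_deriv ((((((y₁ x y).mul (y₂ x y)).const_mul (κ₂ - κ₁)).add
      (((y₁ x y).mul (y₃ x y)).const_mul (κ₃ - κ₁))).add
      (((y₂ x y).mul (y₄ x y)).const_mul (κ₄ - κ₂))).add
      (((y₃ x y).mul (y₄ x y)).const_mul (κ₄ - κ₃))) ?_
    simp only [Sy]; ring
  have hAx : ∀ x y, HasDerivAt (fun s => A s y) ((κ₁ + κ₄ + κ₂) * A x y) x := fun x y => by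
    refine HasDerivAt.congr_deriv
      ((((x₁ x y).mul (x₄ x y)).mul (x₂ x y)).const_mul ((κ₂ - κ₁) * (κ₄ - κ₂))) ?_
    simp only [A, Pi.mul_apply]; ring
  have hBx : ∀ x y, HasDerivAt (fun s => B s y) ((κ₁ + κ₄ + κ₃) * B x y) x := fun x y => by
    refine HasDerivAt.congr_deriv
      ((((x₁ x y).mul (x₄ x y)).mul (x₃ x y)).const_mul ((κ₃ - κ₁) * (κ₄ - κ₃))) ?_
    simp only [B, Pi.mul_apply]; ring
  have hPx : ∀ x y, HasDerivAt (fun s => P s y) (Px x y) x := fun x y => (hAx x y).add (hBx x y)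
  have hPxx : ∀ x y, HasDerivAt (fun s => Px s y) (Pxx x y) x := fun x y => by
    refine HasDerivAt.congr_deriv
      (((hAx x y).const_mul (κ₁ + κ₄ + κ₂)).add ((hBx x y).const_mul (κ₁ + κ₄ + κ₃))) ?_
    simp only [Pxx]; ring
  have hPy : ∀ x y, HasDerivAt (fun s => P x s) (Py x y) y := fun x y => by
    refine HasDerivAt.congr_deriv
      (((((y₁ x y).mul (y₄ x y)).mul (y₂ x y)).const_mul ((κ₂ - κ₁) * (κ₄ - κ₂))).add
      ((((y₁ x y).mul (y₄ x y)).mul (y₃ x y)).const_mul ((κ₃ - κ₁) * (κ₄ - κ₃)))) ?_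
    simp only [Py, A, B, Pi.mul_apply]; ring
  -- the bilinear identity behind the adjoint equation
  have bilin : ∀ x y, S x y * (T x y * Pxx x y - Ty x y * P x y)
        - 2 * (T x y * Px x y - Tx x y * P x y) * Sx x y
      = S x y * (Ty x y * P x y + T x y * Py x y) - 2 * (T x y * P x y) * Sy x y := fun x y => by
    simp only [S, T, Pxx, Ty, P, Px, Tx, Sx, Py, Sy, A, B]
    ring
  have hv : ∀ x y, pXr (fun a b => Real.log (Ptau κ₁ κ₂ κ₃ κ₄ a b / Ptau1 κ₂ κ₃ a b)) x y
      = Sx x y / S x y - Tx x y / T x y := fun x y => by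
    have h : (fun s => Real.log (Ptau κ₁ κ₂ κ₃ κ₄ s y / Ptau1 κ₂ κ₃ s y))
        = fun s => Real.log (S s y) - Real.log (T s y) := by
      funext s
      rw [Ptau_eq, Ptau1_eq]
      exact Real.log_div (S0 s y).ne' (T0 s y).ne'
    rw [pXr, h]
    exact (((hSx x y).log (S0 x y).ne').sub ((hTx x y).log (T0 x y).ne')).deriv
  let N : ℝ := 3 * (1 + κ₁ ^ 2 + κ₂ ^ 2 + κ₃ ^ 2 + κ₄ ^ 2)
  have bT : ∀ x y, |Tx x y| ≤ N * T x y := fun x y =>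
    abs_add_mul_le_mul_add (p₂ x y).le (p₃ x y).le
      (abs_le.2 (by constructor <;> simp only [N] <;> nlinarith))
      (abs_le.2 (by constructor <;> simp only [N] <;> nlinarith))
  have bTy : ∀ x y, |Ty x y| ≤ N * T x y := fun x y =>
    abs_add_mul_le_mul_add (p₂ x y).le (p₃ x y).le
      (abs_le.2 (by constructor <;> simp only [N] <;> nlinarith))
      (abs_le.2 (by constructor <;> simp only [N] <;> nlinarith))
  have bP : ∀ x y, |Px x y| ≤ N * P x y := fun x y =>
    abs_add_mul_le_mul_add (A0 x y).le (B0 x y).le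
      (abs_le.2 (by constructor <;> simp only [N] <;> nlinarith))
      (abs_le.2 (by constructor <;> simp only [N] <;> nlinarith))
  have bPy : ∀ x y, |Py x y| ≤ N * P x y := fun x y =>
    abs_add_mul_le_mul_add (A0 x y).le (B0 x y).le
      (abs_le.2 (by constructor <;> simp only [N] <;> nlinarith))
      (abs_le.2 (by constructor <;> simp only [N] <;> nlinarith))
  have bSy : ∀ x y, |Sy x y| ≤ N * S x y := fun x y => by
    have h1 := (p₁ x y).le; have h2 := (p₂ x y).le; have h3 := (p₃ x y).le
    have h4 := (p₄ x y).le
    refine (abs_add_le _ _).trans ((add_le_add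
      (abs_add_mul_le_mul_add (N := N) (by positivity) (by positivity) ?_ ?_)
      (abs_add_mul_le_mul_add (N := N) (by positivity) (by positivity) ?_ ?_)).trans_eq
        (by simp only [S]; ring)) <;>
    exact abs_le.2 (by constructor <;> simp only [N] <;> nlinarith)
  obtain ⟨δ, δ0, hδ1, hδ2⟩ : ∃ δ, 0 < δ ∧ δ ≤ κ₂ - κ₁ ∧ δ ≤ κ₄ - κ₃ :=
    ⟨min (κ₂ - κ₁) (κ₄ - κ₃), lt_min d21 d43, min_le_left _ _, min_le_right _ _⟩
  have bρ : ∀ x y, T x y * P x y / S x y ^ 2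
      ≤ (κ₄ - κ₁) ^ 2 / δ ^ 2 * Real.exp (2 * α * (x + (κ₁ + κ₄) * y)) := fun x y => by
    have h1 := p₁ x y; have h2 := p₂ x y; have h3 := p₃ x y; have h4 := p₄ x y
    have hT := T0 x y
    have hSl : δ * (T x y * (e₁ x y + e₄ x y)) ≤ S x y := by
      have m1 := mul_le_mul_of_nonneg_right hδ1 (mul_pos h1 h2).le
      have m2 := mul_le_mul_of_nonneg_right (hδ1.trans (by linarith : _ ≤ κ₃ - κ₁))
        (mul_pos h1 h3).le
      have m3 := mul_le_mul_of_nonneg_right (hδ2.trans (by linarith : _ ≤ κ₄ - κ₂))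
        (mul_pos h2 h4).le
      have m4 := mul_le_mul_of_nonneg_right hδ2 (mul_pos h3 h4).le
      simp only [S, T]
      linarith
    have hPu : P x y ≤ (κ₄ - κ₁) ^ 2 * (e₁ x y * e₄ x y) * T x y := by
      have hA : (κ₂ - κ₁) * (κ₄ - κ₂) ≤ (κ₄ - κ₁) ^ 2 := by nlinarith
      have hB : (κ₃ - κ₁) * (κ₄ - κ₃) ≤ (κ₄ - κ₁) ^ 2 := by nlinarith
      have m1 := mul_le_mul_of_nonneg_right hA (mul_pos (mul_pos h1 h4) h2).le
      have m2 := mul_le_mul_of_nonneg_right hB (mul_pos (mul_pos h1 h4) h3).le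
      simp only [P, A, B, T]
      linarith
    have hW := expPhase_mul_le_weight hα0 hα x y
    calc T x y * P x y / S x y ^ 2
        ≤ T x y * ((κ₄ - κ₁) ^ 2 * (e₁ x y * e₄ x y) * T x y)
          / (δ * (T x y * (e₁ x y + e₄ x y))) ^ 2 := by gcongr
      _ = (κ₄ - κ₁) ^ 2 / δ ^ 2 * ((e₁ x y * e₄ x y) / (e₁ x y + e₄ x y) ^ 2) := by field_simp
      _ ≤ _ := by
        gcongr
        exact (div_le_iff₀ (by positivity)).2 hW
  exact exists_adjointSolution_of_bilinear (by positivity : 0 < N) T0 S0 P0 (by fun_prop)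
    (by fun_prop) (by fun_prop) (by fun_prop) (by fun_prop) (by fun_prop) (by fun_prop)
    (by fun_prop) hTx hTxx hTy hSx hSy hPx hPxx hPy bilin hv bT bTy bP bPy bSy bρ

/-- triviality of the kernel of the linearized Miura
transformation ∇M₊(v₂) in the weighted space L²(e^{2αz₂}). -/
theorem kernel_nabla_M_plus_trivial
    (κ₁ κ₂ κ₃ κ₄ a₂₃ a₁₄ c₁₄ α : ℝ)
    (h12 : κ₁ < κ₂) (h23 : κ₂ < κ₃) (h34 : κ₃ < κ₄)
    (hne : κ₂ + κ₃ ≠ κ₁ + κ₄)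
    (ha23 : a₂₃ = (κ₂ + κ₃)/2) (ha14 : a₁₄ = (κ₁ + κ₄)/2)
    (hc14 : c₁₄ = (κ₄ - κ₁)^2/4)
    (hα0 : 0 < α) (hα1 : α < Real.sqrt c₁₄)
    (φ : ℝ → ℝ → ℝ)
    (hφ : ContDiff ℝ (⊤ : ℕ∞) fun p : ℝ × ℝ => φ p.1 p.2)
    (hL2 : ∀ i j : ℕ, Integrable fun p : ℝ × ℝ =>
      ((pXr^[i] (pYr^[j] φ)) p.1 p.2)^2 * Real.exp (2*α*(p.1 + 2*a₁₄*p.2)))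
    (hPDE : ∀ x y,
      pYr φ x y + pXr (pXr φ) x y
        = 2 * pXr (fun a b =>
            Real.log (Ptau κ₁ κ₂ κ₃ κ₄ a b / Ptau1 κ₂ κ₃ a b)) x y
          * pXr φ x y) :
    ∀ x y, φ x y = 0 := by
  have hκ : Real.sqrt c₁₄ = (κ₄ - κ₁) / 2 := by
    rw [hc14, show (κ₄ - κ₁) ^ 2 / 4 = ((κ₄ - κ₁) / 2) ^ 2 by ring]
    exact Real.sqrt_sq (by linarith)
  have hweight : 2 * a₁₄ = κ₁ + κ₄ := by rw [ha14]; ring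
  rw [hweight] at hL2
  obtain ⟨ρ, ρx, ρy, q, C, hρ⟩ :=
    exists_adjointSolution_Ptau h12 h23 h34 hα0.le (by linarith : 2 * α ≤ κ₄ - κ₁)
  have hX := contDiff_pXr hφ
  have hφx : ∀ x y, pXr φ x y = 0 :=
    hρ.deriv_fst_eq_zero hφ.continuous hX.continuous (contDiff_pYr hφ).continuous
      (hasDerivAt_pXr hφ) (hasDerivAt_pXr hX) (hasDerivAt_pYr hφ) (hL2 0 0) (hL2 1 0) (hL2 0 1) hPDE
  have hI : Integrable fun p : ℝ × ℝ =>
      φ p.1 p.2 ^ 2 * Real.exp (2 * α * (p.1 + (κ₁ + κ₄) * p.2)) := hL2 0 0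
  have hint := integral_plane_eq_zero_of_hasDerivAt_fst
    (F := fun x y => φ x y ^ 2 * Real.exp (2 * α * (x + (κ₁ + κ₄) * y)))
    (F' := fun x y => 2 * α * (φ x y ^ 2 * Real.exp (2 * α * (x + (κ₁ + κ₄) * y))))
    (fun x y => by
      refine HasDerivAt.congr_deriv (((hasDerivAt_pXr hφ x y).pow 2).mul
        (((hasDerivAt_id x).add_const ((κ₁ + κ₄) * y)).const_mul (2 * α)).exp) ?_
      simp only [hφx, Pi.pow_apply, id_eq]
      ring) hI (hI.const_mul _)
  intro x y
  rw [integral_const_mul] at hint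
  have h := eq_zero_of_integral_plane_eq_zero
    ((hφ.continuous.pow 2).mul (by fun_prop))
    (fun p => mul_nonneg (sq_nonneg _) (Real.exp_pos _).le) hI
    ((mul_eq_zero.1 hint).resolve_left (by positivity)) (x, y)
  simpa using h
end
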